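/- Under the standing assumptions, and assuming in addition that ∂Ω is uniformly n-rectifiable, the family Top satisfies the Carleson packing condition ∑_{R ∈ Top} μ(R) ≤ M(ε) μ(R₀), where M(ε) depends only on ε, n, A, the AD-regularity and uniform rectifiability constants of ∂Ω, and the weak-A∞ constants in B_{R₀}. -/

import Mathlib

open Metric MeasureTheory Set Filter Topology

noncomputable section

/-- Euclidean space `ℝ^d`. -/
abbrev Euc (d : ℕ) : Type := EuclideanSpace ℝ (Fin d)

namespace HarmMeas

/-- Distance between two sets. -/
def setD {d : ℕ} (s t : Set (Euc d)) : ℝ := sInf (Set.image2 dist s t)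

/-- A continuous function is subharmonic on `U` if it satisfies the sub-mean-value
property on every ball whose closure is contained in `U`. -/
def SubharmonicOn {d : ℕ} (u : Euc d → ℝ) (U : Set (Euc d)) : Prop :=
  ContinuousOn u U ∧ ∀ x ∈ U, ∀ r : ℝ, 0 < r → closedBall x r ⊆ U →
    u x ≤ ⨍ y in ball x r, u y

/-- Harmonic (continuous) functions: both `u` and `-u` are subharmonic. -/
def HarmonicOnS {d : ℕ} (u : Euc d → ℝ) (U : Set (Euc d)) : Prop :=
  SubharmonicOn u U ∧ SubharmonicOn (fun y => -u y) U

/-- The upper (Perron) class associated to boundary data `f` on the open set `Ω`: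
superharmonic functions on `Ω`, bounded below, whose liminf at each boundary point
dominates `f` there. -/
def upperFamily {d : ℕ} (Ω : Set (Euc d)) (f : Euc d → ℝ) : Set (Euc d → ℝ) :=
  {u | SubharmonicOn (fun y => -u y) Ω ∧ BddBelow (u '' Ω) ∧
       ∀ ξ ∈ frontier Ω, f ξ ≤ Filter.liminf u (nhdsWithin ξ Ω)}

/-- The (upper) Perron solution of the Dirichlet problem in `Ω` with boundary data `f`,
evaluated at `p`. -/
def perron {d : ℕ} (Ω : Set (Euc d)) (f : Euc d → ℝ) (p : Euc d) : ℝ :=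
  sInf ((fun u => u p) '' upperFamily Ω f)

/-- Harmonic measure `ω^p(A)` of `A` for the open set `Ω` with pole `p`: the value at `p`
of the Perron solution with boundary data the characteristic function of `A`. -/
def hMeasure {d : ℕ} (Ω : Set (Euc d)) (p : Euc d) (A : Set (Euc d)) : ℝ :=
  perron Ω (A.indicator fun _ => 1) p

/-- The Green function `g(p,x)` of `Ω ⊆ ℝ^{n+1}` with pole `p`: the fundamental solution
`|x-p|^{1-n}` minus the Perron solution with the fundamental solution as boundary data. -/
def greenFn (n : ℕ) (Ω : Set (Euc (n+1))) (p x : Euc (n+1)) : ℝ :=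
  ‖x - p‖ ^ ((1 : ℤ) - n) - perron Ω (fun ξ => ‖ξ - p‖ ^ ((1 : ℤ) - n)) x

/-- `F ⊆ ℝ^{n+1}` is `n`-AD-regular with constant `C₀`. -/
def ADRegular (n : ℕ) (C₀ : ℝ) (F : Set (Euc (n+1))) : Prop :=
  ∀ x ∈ F, ∀ r : ℝ, 0 < r → ENNReal.ofReal r ≤ EMetric.diam F →
    ENNReal.ofReal (C₀⁻¹ * r ^ n) ≤ μH[n] (F ∩ ball x r) ∧
      μH[n] (F ∩ ball x r) ≤ ENNReal.ofReal (C₀ * r ^ n)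

/-- A `λ`-carrot curve from `x` to `y` in `Ω`: a curve `γ ⊆ Ω ∪ {y}` with endpoints `x`
and `y` such that `dist(z, ∂Ω) ≥ λ ⋅ ℋ¹(γ(y,z))` for every point `z = γ(t)` of the curve,
where `γ(y,z)` is the arc of `γ` between `y` and `z`. -/
def CarrotCurve {d : ℕ} (Ω : Set (Euc d)) (lam : ℝ) (x y : Euc d) : Prop :=
  ∃ γ : ℝ → Euc d, ContinuousOn γ (Icc 0 1) ∧ γ 0 = x ∧ γ 1 = y ∧
    γ '' Icc 0 1 ⊆ Ω ∪ {y} ∧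
    ∀ t ∈ Icc (0:ℝ) 1,
      ENNReal.ofReal lam * μH[1] (γ '' Icc t 1) ≤
        ENNReal.ofReal (infDist (γ t) (frontier Ω))

/-- A `C`-good Harnack chain from `x ∈ Ω` to `y ∈ cl Ω`, all of whose balls are moreover
contained in the set `W`: consecutive balls meet, each ball has radius comparable (with
constant `C`) to its distance to `∂Ω`, radii are quasi-monotone, and for each `t > 0`
there are at most `C` balls of radius in `(t, 2t]`.  If `y ∈ Ω` the chain is finite and
`y` lies in its last ball; if `y ∈ ∂Ω` the chain is infinite and the balls converge
to `y`. -/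
def GoodChainIn {d : ℕ} (Ω W : Set (Euc d)) (C : ℝ) (x y : Euc d) : Prop :=
  (y ∈ Ω ∧ ∃ (N : ℕ) (c : ℕ → Euc d) (r : ℕ → ℝ),
    x ∈ ball (c 0) (r 0) ∧ y ∈ ball (c N) (r N) ∧
    (∀ j ≤ N, 0 < r j ∧ ball (c j) (r j) ⊆ Ω ∩ W) ∧
    (∀ j < N, (ball (c j) (r j) ∩ ball (c (j+1)) (r (j+1))).Nonempty) ∧
    (∀ j ≤ N, C⁻¹ * setD (ball (c j) (r j)) (frontier Ω) ≤ r j ∧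
      r j ≤ C * setD (ball (c j) (r j)) (frontier Ω)) ∧
    (∀ i j, i ≤ N → j ≤ N → i < j → r j ≤ C * r i) ∧
    (∀ t : ℝ, 0 < t →
      {j | j ≤ N ∧ t < r j ∧ r j ≤ 2 * t}.Finite ∧
      (Nat.card {j | j ≤ N ∧ t < r j ∧ r j ≤ 2 * t} : ℝ) ≤ C))
  ∨ (y ∈ frontier Ω ∧ ∃ (c : ℕ → Euc d) (r : ℕ → ℝ),
    x ∈ ball (c 0) (r 0) ∧
    Filter.Tendsto (fun j => infDist y (ball (c j) (r j))) atTop (nhds 0) ∧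
    (∀ j, 0 < r j ∧ ball (c j) (r j) ⊆ Ω ∩ W) ∧
    (∀ j, (ball (c j) (r j) ∩ ball (c (j+1)) (r (j+1))).Nonempty) ∧
    (∀ j, C⁻¹ * setD (ball (c j) (r j)) (frontier Ω) ≤ r j ∧
      r j ≤ C * setD (ball (c j) (r j)) (frontier Ω)) ∧
    (∀ i j : ℕ, i < j → r j ≤ C * r i) ∧
    (∀ t : ℝ, 0 < t →
      {j | t < r j ∧ r j ≤ 2 * t}.Finite ∧
      (Nat.card {j | t < r j ∧ r j ≤ 2 * t} : ℝ) ≤ C))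

/-- A `C`-good Harnack chain from `x` to `y`. -/
def GoodChain {d : ℕ} (Ω : Set (Euc d)) (C : ℝ) (x y : Euc d) : Prop :=
  GoodChainIn Ω Set.univ C x y


/-- The harmonic measure of the open set `Ω` satisfies the weak-`A∞` condition: for every
`ε₀ ∈ (0,1)` there is `δ₀ ∈ (0,1)` such that for every ball `B` centered on `∂Ω`, every
pole `p ∈ Ω \ 4B` and every Borel `E ⊆ B ∩ ∂Ω`, `ℋⁿ(E) ≤ δ₀ ℋⁿ(B ∩ ∂Ω)` implies
`ω^p(E) ≤ ε₀ ω^p(2B)`. -/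
def WeakAInfty (n : ℕ) (Ω : Set (Euc (n+1))) : Prop :=
  ∀ ε₀ ∈ Set.Ioo (0:ℝ) 1, ∃ δ₀ ∈ Set.Ioo (0:ℝ) 1,
    ∀ x₀ ∈ frontier Ω, ∀ r₀ : ℝ, 0 < r₀ →
      ∀ p ∈ Ω \ closedBall x₀ (4 * r₀),
        ∀ A : Set (Euc (n+1)), MeasurableSet A → A ⊆ ball x₀ r₀ ∩ frontier Ω →
          μH[n] A ≤ ENNReal.ofReal δ₀ * μH[n] (ball x₀ r₀ ∩ frontier Ω) →
          hMeasure Ω p A ≤ ε₀ * hMeasure Ω p (ball x₀ (2 * r₀))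

/-- `ω^p` satisfies the weak-`A∞` condition in the ball `B(x₀,r₀)`, with gauge `D`
(i.e. `δ₀ = D ε₀` is a witness for each `ε₀ ∈ (0,1)`). -/
def WeakAInftyBallWith (n : ℕ) (Ω : Set (Euc (n+1))) (p x₀ : Euc (n+1)) (r₀ : ℝ)
    (D : ℝ → ℝ) : Prop :=
  ∀ ε₀ ∈ Set.Ioo (0:ℝ) 1, D ε₀ ∈ Set.Ioo (0:ℝ) 1 ∧
    ∀ A : Set (Euc (n+1)), MeasurableSet A → A ⊆ ball x₀ r₀ ∩ frontier Ω →
      μH[n] A ≤ ENNReal.ofReal (D ε₀) * μH[n] (ball x₀ r₀ ∩ frontier Ω) →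
      hMeasure Ω p A ≤ ε₀ * hMeasure Ω p (ball x₀ (2 * r₀))

/-- The weak local John condition for `Ω ⊆ ℝ^{n+1}`: there are `λ, θ ∈ (0,1)` and `Λ ≥ 2`
such that every `x ∈ Ω` sees (through `λ`-carrot curves) a Borel subset `F` of
`B(x, Λ δ_Ω(x)) ∩ ∂Ω` of surface measure at least `θ ℋⁿ(B(x, Λ δ_Ω(x)) ∩ ∂Ω)`. -/
def WeakLocalJohn (n : ℕ) (Ω : Set (Euc (n+1))) : Prop :=
  ∃ lam ∈ Set.Ioo (0:ℝ) 1, ∃ θ ∈ Set.Ioo (0:ℝ) 1, ∃ Λ : ℝ, 2 ≤ Λ ∧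
    ∀ x ∈ Ω, ∃ F : Set (Euc (n+1)), MeasurableSet F ∧
      F ⊆ ball x (Λ * infDist x (frontier Ω)) ∩ frontier Ω ∧
      ENNReal.ofReal θ * μH[n] (ball x (Λ * infDist x (frontier Ω)) ∩ frontier Ω) ≤
        μH[n] F ∧
      ∀ y ∈ F, CarrotCurve Ω lam x y

/-- The corkscrew condition for `Ω`. -/
def CorkscrewCond {d : ℕ} (Ω : Set (Euc d)) : Prop :=
  ∃ c > (0:ℝ), ∀ x ∈ frontier Ω, ∀ ρ : ℝ, 0 < ρ → ENNReal.ofReal ρ ≤ EMetric.diam Ω →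
    ∃ (y : Euc d) (r : ℝ), c * ρ ≤ r ∧ ball y r ⊆ ball x ρ ∩ Ω

/-- `F ⊆ ℝ^{n+1}` is uniformly `n`-rectifiable, with AD-regularity constant `C₀` and
big-pieces-of-Lipschitz-images constants `θ`, `M`. -/
def UnifRectifiable (n : ℕ) (C₀ θ M : ℝ) (F : Set (Euc (n+1))) : Prop :=
  ADRegular n C₀ F ∧ 0 < θ ∧ 0 < M ∧
    ∀ x ∈ F, ∀ r : ℝ, 0 < r → ENNReal.ofReal r ≤ EMetric.diam F →
      ∃ g : Euc n → Euc (n+1), LipschitzOnWith (Real.toNNReal M) g (ball 0 r) ∧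
        ENNReal.ofReal (θ * r ^ n) ≤ μH[n] (F ∩ ball x r ∩ g '' ball 0 r)

/-- The set `WA(p,Λ)` of boundary points `x ∈ B(p, 10 δ_Ω(p)) ∩ ∂Ω` at which the harmonic
measure `ω^p` is comparable (with constant `Λ`) to the normalized surface measure
`μ(B(x,r))/μ(B(x,δ_Ω(p)))` at every scale `0 < r ≤ δ_Ω(p)`. -/
def WAset (n : ℕ) (Ω : Set (Euc (n+1))) (p : Euc (n+1)) (Λ : ℝ) : Set (Euc (n+1)) :=
  {x | x ∈ ball p (10 * infDist p (frontier Ω)) ∩ frontier Ω ∧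
    ∀ r : ℝ, 0 < r → r ≤ infDist p (frontier Ω) →
      Λ⁻¹ * ((μH[n] (frontier Ω ∩ ball x r)).toReal /
          (μH[n] (frontier Ω ∩ ball x (infDist p (frontier Ω)))).toReal) ≤
        hMeasure Ω p (ball x r) ∧
      hMeasure Ω p (ball x r) ≤
        Λ * ((μH[n] (frontier Ω ∩ ball x r)).toReal /
          (μH[n] (frontier Ω ∩ ball x (infDist p (frontier Ω)))).toReal)}


/-- A David–Semmes dyadic lattice associated to a measure `μ` supported on the set `F`,
with comparability constant `Cl`: for each generation `j ∈ ℤ` a partition of `F` into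
Borel "cubes" of side length `2^{-j}`, nested across generations, with
`diam Q ≤ ℓ(Q)`, `μ(Q) ≈ ℓ(Q)ⁿ`, centers deep inside the cubes, and small boundaries. -/
structure DSLattice (n : ℕ) (F : Set (Euc (n+1))) (μ : Measure (Euc (n+1))) (Cl : ℝ) where
  cube : ℤ → Set (Set (Euc (n+1)))
  center : Set (Euc (n+1)) → Euc (n+1)
  one_le_Cl : 1 ≤ Cl
  subset_F : ∀ j, ∀ Q ∈ cube j, Q ⊆ F
  nonempty : ∀ j, ∀ Q ∈ cube j, Q.Nonempty
  measurableSet : ∀ j, ∀ Q ∈ cube j, MeasurableSet Q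
  cover : ∀ j : ℤ, ENNReal.ofReal ((2:ℝ) ^ (-j)) ≤ EMetric.diam F →
    ∀ x ∈ F, ∃ Q ∈ cube j, x ∈ Q
  disj : ∀ j, ∀ Q ∈ cube j, ∀ Q' ∈ cube j, Q ≠ Q' → Disjoint Q Q'
  nested : ∀ j k : ℤ, k ≤ j → ∀ Q ∈ cube j, ∀ Q' ∈ cube k, (Q ∩ Q').Nonempty → Q ⊆ Q'
  diam_le : ∀ j, ∀ Q ∈ cube j, EMetric.diam Q ≤ ENNReal.ofReal ((2:ℝ) ^ (-j))
  measure_lb : ∀ j, ∀ Q ∈ cube j, ENNReal.ofReal (Cl⁻¹ * ((2:ℝ) ^ (-j)) ^ n) ≤ μ Q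
  measure_ub : ∀ j, ∀ Q ∈ cube j, μ Q ≤ ENNReal.ofReal (Cl * ((2:ℝ) ^ (-j)) ^ n)
  center_mem : ∀ j, ∀ Q ∈ cube j, center Q ∈ Q
  center_far : ∀ j, ∀ Q ∈ cube j, ∀ y ∈ F \ Q, Cl⁻¹ * (2:ℝ) ^ (-j) ≤ dist (center Q) y
  small_boundary : ∀ j, ∀ Q ∈ cube j, ∀ τ : ℝ, 0 < τ → τ < 1 →
    μ {x ∈ Q | infDist x (F \ Q) ≤ τ * (2:ℝ) ^ (-j)} +
        μ {x ∈ F \ Q | infDist x Q ≤ τ * (2:ℝ) ^ (-j)} ≤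
      ENNReal.ofReal (Cl * τ ^ (1 / Cl) * ((2:ℝ) ^ (-j)) ^ n)

/-- A cube of the lattice, recorded together with its generation. -/
abbrev Cube (n : ℕ) : Type := ℤ × Set (Euc (n+1))

/-- Membership of a (generation, cube) pair in the lattice. -/
def DSLattice.mem {n : ℕ} {F : Set (Euc (n+1))} {μ : Measure (Euc (n+1))} {Cl : ℝ}
    (L : DSLattice n F μ Cl) (q : Cube n) : Prop := q.2 ∈ L.cube q.1

/-- Side length `ℓ(Q) = 2^{-j}` of a cube of generation `j`. -/
def sideLen {n : ℕ} (q : Cube n) : ℝ := (2:ℝ) ^ (-q.1)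

/-- The ball `t·B_Q = B(z_Q, t · 4 ℓ(Q))` associated to the cube `q`. -/
def cubeBall {n : ℕ} {F : Set (Euc (n+1))} {μ : Measure (Euc (n+1))} {Cl : ℝ}
    (L : DSLattice n F μ Cl) (t : ℝ) (q : Cube n) : Set (Euc (n+1)) :=
  ball (L.center q.2) (t * (4 * sideLen q))

/-- The dilated cube `λQ = {x ∈ F : dist(x,Q) ≤ (λ-1) ℓ(Q)}`. -/
def dilCube {n : ℕ} (F : Set (Euc (n+1))) (lam : ℝ) (q : Cube n) : Set (Euc (n+1)) :=
  {x ∈ F | infDist x q.2 ≤ (lam - 1) * sideLen q}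

/-- The bilateral beta coefficient `bβ_F(B(x,r))`: infimum over affine `n`-planes `L`
meeting `B(x,r)` of `r⁻¹ (sup_{y ∈ F ∩ B} dist(y,L) + sup_{y ∈ L ∩ B} dist(y,F))`. -/
def bbeta (n : ℕ) (F : Set (Euc (n+1))) (x : Euc (n+1)) (r : ℝ) : ℝ :=
  sInf {t | ∃ L : AffineSubspace ℝ (Euc (n+1)),
    Module.finrank ℝ L.direction = n ∧ ((L : Set (Euc (n+1))) ∩ ball x r).Nonempty ∧
    t = r⁻¹ * ((⨆ y ∈ F ∩ ball x r, infDist y (L : Set (Euc (n+1)))) +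
      ⨆ y ∈ (L : Set (Euc (n+1))) ∩ ball x r, infDist y F)}

/-- `q` belongs to `D_μ(R)`: a lattice cube contained in `R` of generation at least that
of `R`. -/
def InD {n : ℕ} {F : Set (Euc (n+1))} {μ : Measure (Euc (n+1))} {Cl : ℝ}
    (L : DSLattice n F μ Cl) (R q : Cube n) : Prop :=
  L.mem q ∧ q.2 ⊆ R.2 ∧ R.1 ≤ q.1

section Corona
variable {n : ℕ} {F : Set (Euc (n+1))} {μ : Measure (Euc (n+1))} {Cl : ℝ}

/-- The harmonic-measure density `ω^p(λQ)/μ(λQ)` of the dilated cube `λQ`. -/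
def dens (Ω : Set (Euc (n+1))) (μ : Measure (Euc (n+1))) (p : Euc (n+1)) (lam : ℝ)
    (q : Cube n) : ℝ :=
  hMeasure Ω p (dilCube (frontier Ω) lam q) / (μ (dilCube (frontier Ω) lam q)).toReal

/-- Being a high density cube (before maximality): `ω^p(2Q)/μ(2Q) ≥ A ω^p(2R₀)/μ(2R₀)`. -/
def HDcond (Ω : Set (Euc (n+1))) (μ : Measure (Euc (n+1))) (L : DSLattice n F μ Cl)
    (p : Euc (n+1)) (R₀ : Cube n) (A : ℝ) (q : Cube n) : Prop :=
  L.mem q ∧ q.2 ⊆ R₀.2 ∧ A * dens Ω μ p 2 R₀ ≤ dens Ω μ p 2 q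

/-- Being a low density cube (before maximality): `ω^p(Q)/μ(Q) ≤ A⁻¹ ω^p(R₀)/μ(R₀)`. -/
def LDcond (Ω : Set (Euc (n+1))) (μ : Measure (Euc (n+1))) (L : DSLattice n F μ Cl)
    (p : Euc (n+1)) (R₀ : Cube n) (A : ℝ) (q : Cube n) : Prop :=
  L.mem q ∧ q.2 ⊆ R₀.2 ∧
    hMeasure Ω p q.2 / (μ q.2).toReal ≤ A⁻¹ * (hMeasure Ω p R₀.2 / (μ R₀.2).toReal)

/-- Maximal cubes of the lattice satisfying a given property. -/
def MaximalWith (L : DSLattice n F μ Cl) (P : Cube n → Prop) (q : Cube n) : Prop :=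
  P q ∧ ∀ q' : Cube n, L.mem q' → q'.1 < q.1 → q.2 ⊆ q'.2 → ¬ P q'

/-- The family `HD` of maximal high density cubes contained in `R₀`. -/
def HDfam (Ω : Set (Euc (n+1))) (μ : Measure (Euc (n+1))) (L : DSLattice n F μ Cl)
    (p : Euc (n+1)) (R₀ : Cube n) (A : ℝ) : Set (Cube n) :=
  {q | MaximalWith L (HDcond Ω μ L p R₀ A) q}

/-- The family `LD` of maximal low density cubes contained in `R₀`. -/
def LDfam (Ω : Set (Euc (n+1))) (μ : Measure (Euc (n+1))) (L : DSLattice n F μ Cl)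
    (p : Euc (n+1)) (R₀ : Cube n) (A : ℝ) : Set (Cube n) :=
  {q | MaximalWith L (LDcond Ω μ L p R₀ A) q}

/-- `B_H`, the union of the high density cubes. -/
def BHset (Ω : Set (Euc (n+1))) (μ : Measure (Euc (n+1))) (L : DSLattice n F μ Cl)
    (p : Euc (n+1)) (R₀ : Cube n) (A : ℝ) : Set (Euc (n+1)) :=
  ⋃ q ∈ HDfam Ω μ L p R₀ A, q.2

/-- `B_L`, the union of the low density cubes. -/
def BLset (Ω : Set (Euc (n+1))) (μ : Measure (Euc (n+1))) (L : DSLattice n F μ Cl)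
    (p : Euc (n+1)) (R₀ : Cube n) (A : ℝ) : Set (Euc (n+1)) :=
  ⋃ q ∈ LDfam Ω μ L p R₀ A, q.2

/-- The family `G` of cubes of `D_μ(R₀)` not contained in any high or low density cube. -/
def Gfam (Ω : Set (Euc (n+1))) (μ : Measure (Euc (n+1))) (L : DSLattice n F μ Cl)
    (p : Euc (n+1)) (R₀ : Cube n) (A : ℝ) : Set (Cube n) :=
  {q | InD L R₀ q ∧
    ∀ q' ∈ HDfam Ω μ L p R₀ A ∪ LDfam Ω μ L p R₀ A, ¬ q.2 ⊆ q'.2}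

/-- `bβ(Q) := bβ_{∂Ω}(100 B_Q)`. -/
def bbetaQ (n : ℕ) {F : Set (Euc (n+1))} {μ : Measure (Euc (n+1))} {Cl : ℝ}
    (L : DSLattice n F μ Cl) (G : Set (Euc (n+1))) (q : Cube n) : ℝ :=
  bbeta n G (L.center q.2) (100 * (4 * sideLen q))

/-- `q'` is the dyadic parent of `q`. -/
def IsParent (L : DSLattice n F μ Cl) (q' q : Cube n) : Prop :=
  L.mem q' ∧ q'.1 = q.1 - 1 ∧ q.2 ⊆ q'.2

/-- The stopping condition for the corona decomposition: `Q ∉ G` or `bβ(Q̂) > ε`. -/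
def StopBad (Ω : Set (Euc (n+1))) (μ : Measure (Euc (n+1))) (L : DSLattice n F μ Cl)
    (p : Euc (n+1)) (R₀ : Cube n) (A ε : ℝ) (q : Cube n) : Prop :=
  q ∉ Gfam Ω μ L p R₀ A ∨ ∃ q', IsParent L q' q ∧ ε < bbetaQ n L (frontier Ω) q'

/-- `Stop(R)`: the maximal cubes of `D_μ(R) \ {R}` satisfying the stopping condition. -/
def StopFam (Ω : Set (Euc (n+1))) (μ : Measure (Euc (n+1))) (L : DSLattice n F μ Cl)
    (p : Euc (n+1)) (R₀ : Cube n) (A ε : ℝ) (R : Cube n) : Set (Cube n) :=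
  {q | L.mem q ∧ q.2 ⊆ R.2 ∧ R.1 < q.1 ∧ StopBad Ω μ L p R₀ A ε q ∧
    ∀ q' : Cube n, L.mem q' → q'.2 ⊆ R.2 → R.1 < q'.1 → q'.1 < q.1 → q.2 ⊆ q'.2 →
      ¬ StopBad Ω μ L p R₀ A ε q'}

/-- `Tree(R)`: the cubes of `D_μ(R)` not contained in any cube from `Stop(R)`. -/
def TreeFam (Ω : Set (Euc (n+1))) (μ : Measure (Euc (n+1))) (L : DSLattice n F μ Cl)
    (p : Euc (n+1)) (R₀ : Cube n) (A ε : ℝ) (R : Cube n) : Set (Cube n) :=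
  {q | InD L R q ∧ ∀ s ∈ StopFam Ω μ L p R₀ A ε R, ¬ q.2 ⊆ s.2}

/-- The generations `Top_k` of the corona decomposition. -/
def TopFam (Ω : Set (Euc (n+1))) (μ : Measure (Euc (n+1))) (L : DSLattice n F μ Cl)
    (p : Euc (n+1)) (R₀ : Cube n) (A ε : ℝ) : ℕ → Set (Cube n)
  | 0 => {q | q ∈ Gfam Ω μ L p R₀ A ∧ q.1 = R₀.1 + 10}
  | (k+1) => {q | ∃ R ∈ TopFam Ω μ L p R₀ A ε k,
      q ∈ StopFam Ω μ L p R₀ A ε R ∧ q ∈ Gfam Ω μ L p R₀ A}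

/-- `Top := ⋃_k Top_k`. -/
def TopAll (Ω : Set (Euc (n+1))) (μ : Measure (Euc (n+1))) (L : DSLattice n F μ Cl)
    (p : Euc (n+1)) (R₀ : Cube n) (A ε : ℝ) : Set (Cube n) :=
  {q | ∃ k : ℕ, q ∈ TopFam Ω μ L p R₀ A ε k}

/-- `Tree^{(N)}(R)`: cubes of `Tree(R)` of side length larger than `2^{-N} ℓ(R₀)`. -/
def TreeN (Ω : Set (Euc (n+1))) (μ : Measure (Euc (n+1))) (L : DSLattice n F μ Cl)
    (p : Euc (n+1)) (R₀ : Cube n) (A ε : ℝ) (N : ℕ) (R : Cube n) : Set (Cube n) :=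
  {q | q ∈ TreeFam Ω μ L p R₀ A ε R ∧ q.1 < R₀.1 + N}

/-- `Top_b^{(N)}`: the cubes `R` of `Top` of side length larger than `2^{-N} ℓ(R₀)` with
`Tree(R) ≠ {R}`. -/
def TopbN (Ω : Set (Euc (n+1))) (μ : Measure (Euc (n+1))) (L : DSLattice n F μ Cl)
    (p : Euc (n+1)) (R₀ : Cube n) (A ε : ℝ) (N : ℕ) : Set (Cube n) :=
  {R | R ∈ TopAll Ω μ L p R₀ A ε ∧ R.1 < R₀.1 + N ∧
    ∃ q ∈ TreeFam Ω μ L p R₀ A ε R, q ≠ R}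

end Corona

/-!
A cube of `Top` beyond the first generation is a child of a cube with bilateral beta number
larger than `ε`, so it suffices to pack the latter cubes.

In a given cube, uniform rectifiability provides a Lipschitz map from a ball of `ℝⁿ` whose image
covers a fixed proportion of the cube. If the map is close to an affine map that shrinks some
direction, then the image of the corresponding ball is small, so only few scales of this kind can
occur over most of the image, and a random coding of the remaining points by finitely many labels
extracts a set `K` of definite size on which the map is bilipschitz. Near a point of `g(K)`, the
bilateral beta number at scale `t` is small unless `g` is not nearly affine at scale `t`, or `K` is
porous there, or `∂Ω` has a point far from `g(K)`. The first possibility is controlled by the sum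
over the scales of the energies of the second differences of `g`, which telescopes thanks to the
parallelogram identity. The other two satisfy a packing condition because every gap at scale `t`
is charged to a piece of the complement that is counted for boundedly many scales.

Hence every cube `Q` has a subset of proportional measure whose points lie in boundedly many cubes
of large bilateral beta number contained in `Q`. The first of these subsets that contains a given
point already bounds how many of them contain it, so they overlap boundedly and the measures of the
cubes sum to at most a multiple of `μ(R₀)`.
-/
section OverlapCount

variable {X ι : Type*}

/-- The number of sets of the family `S` containing the point `x`, in `[0, ∞]`. -/
def overlapCount (S : ι → Set X) (x : X) : ENNReal := ∑' i, (S i).indicator 1 x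

lemma overlapCount_eq_encard (S : ι → Set X) (x : X) :
    overlapCount S x = ({i | x ∈ S i}.encard : ENNReal) := by
  rw [← ENNReal.tsum_set_one, tsum_subtype {i | x ∈ S i} fun _ => (1 : ENNReal)]
  rfl

lemma overlapCount_coe_eq_encard (T : Set ι) (S : ι → Set X) (x : X) :
    overlapCount (fun i : T => S i) x = ({i ∈ T | x ∈ S i}.encard : ENNReal) := by
  rw [overlapCount_eq_encard, ← Subtype.val_injective.encard_image]
  congr 2
  ext i
  simp [and_comm]

lemma overlapCount_le_of_injOn {κ : Type*} {S : ι → Set X} {T : κ → Set X} {x : X} (f : ι → κ)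
    (hf : InjOn f {i | x ∈ S i}) (hST : ∀ i, x ∈ S i → x ∈ T (f i)) :
    overlapCount S x ≤ overlapCount T x := by
  rw [overlapCount_eq_encard, overlapCount_eq_encard, ← hf.encard_image]
  have hsub : f '' {i | x ∈ S i} ⊆ {k | x ∈ T k} := image_subset_iff.2 fun i hi => hST i hi
  exact_mod_cast encard_le_encard hsub

lemma overlapCount_mono {S T : ι → Set X} (h : ∀ i, S i ⊆ T i) (x : X) :
    overlapCount S x ≤ overlapCount T x :=
  ENNReal.tsum_le_tsum fun i => indicator_le_indicator_of_subset (h i) (by simp) x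

variable [MeasurableSpace X] [Countable ι]

lemma measurable_overlapCount {S : ι → Set X} (hS : ∀ i, MeasurableSet (S i)) :
    Measurable (overlapCount S) :=
  Measurable.tsum fun i => measurable_one.indicator (hS i)

lemma lintegral_overlapCount (ν : Measure X) {S : ι → Set X} (hS : ∀ i, MeasurableSet (S i)) :
    ∫⁻ x, overlapCount S x ∂ν = ∑' i, ν (S i) := by
  simp_rw [overlapCount]
  rw [lintegral_tsum fun i => (measurable_one.indicator (hS i)).aemeasurable]
  exact tsum_congr fun i => lintegral_indicator_one (hS i)

lemma tsum_measure_le_of_overlapCount_le (ν : Measure X) {S : ι → Set X} {B : Set X} {N : ENNReal}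
    (hS : ∀ i, MeasurableSet (S i)) (hB : MeasurableSet B) (hSB : ∀ i, S i ⊆ B)
    (hN : ∀ x, overlapCount S x ≤ N) : ∑' i, ν (S i) ≤ N * ν B := by
  rw [← lintegral_overlapCount ν hS, ← lintegral_indicator_const hB]
  refine lintegral_mono fun x => ?_
  by_cases hx : x ∈ B
  · simpa [hx] using hN x
  · have hxS : ∀ i, x ∉ S i := fun i h => hx (hSB i h)
    simp [overlapCount, hxS]

-- Markov's inequality; measurable hulls make it available for arbitrary sets.
lemma mul_measure_le_overlapCount_le (ν : Measure X) (S : ι → Set X) (a : ENNReal) :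
    a * ν {x | a ≤ overlapCount S x} ≤ ∑' i, ν (S i) := by
  have hmeas : ∀ i, MeasurableSet (toMeasurable ν (S i)) := fun i => measurableSet_toMeasurable _ _
  calc a * ν {x | a ≤ overlapCount S x}
      ≤ a * ν {x | a ≤ overlapCount (fun i => toMeasurable ν (S i)) x} := by
        gcongr with x
        exact overlapCount_mono (fun i => subset_toMeasurable ν (S i)) x
    _ ≤ ∫⁻ x, overlapCount (fun i => toMeasurable ν (S i)) x ∂ν :=
        mul_meas_ge_le_lintegral (measurable_overlapCount hmeas) a
    _ = ∑' i, ν (S i) := by simp [lintegral_overlapCount ν hmeas]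

lemma le_measure_overlapCount_lt (ν : Measure X) (S : ι → Set X) {E : Set X} {a N : ENNReal}
    (hN : N ≠ 0) (hN' : N ≠ ⊤) (ha : a ≠ ⊤) (hE : 2 * a ≤ ν E) (hS : ∑' i, ν (S i) ≤ N * a) :
    a ≤ ν {x ∈ E | overlapCount S x < N} := by
  have hmarkov : ν {x | N ≤ overlapCount S x} ≤ a :=
    (ENNReal.mul_le_mul_iff_right hN hN').1 ((mul_measure_le_overlapCount_le ν S N).trans hS)
  have hE' : E ⊆ {x ∈ E | overlapCount S x < N} ∪ {x | N ≤ overlapCount S x} := fun x hx =>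
    (lt_or_ge (overlapCount S x) N).imp (fun h => ⟨hx, h⟩) id
  refine (ENNReal.add_le_add_iff_right ha).1 ?_
  calc a + a = 2 * a := (two_mul a).symm
    _ ≤ ν E := hE
    _ ≤ ν {x ∈ E | overlapCount S x < N} + ν {x | N ≤ overlapCount S x} :=
        (measure_mono hE').trans (measure_union_le _ _)
    _ ≤ ν {x ∈ E | overlapCount S x < N} + a := by gcongr

end OverlapCount

section DyadicWindow

variable {X : Type*} {a b : ℝ}

lemma overlapCount_dyadicWindow_le (f : X → ℝ) (ha : 0 < a) {m : ℕ} (hb : b ≤ a * 2 ^ m) (x : X) :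
    overlapCount (fun j : ℕ => {x | a / 2 ^ j < f x ∧ f x < b / 2 ^ j}) x ≤ m := by
  classical
  set P : Set ℕ := {j | a / 2 ^ j < f x ∧ f x < b / 2 ^ j}
  have hcount : overlapCount (fun j : ℕ => {x | a / 2 ^ j < f x ∧ f x < b / 2 ^ j}) x
      = ∑' j, P.indicator (1 : ℕ → ENNReal) j := rfl
  rw [hcount]
  obtain hempty | hne := P.eq_empty_or_nonempty
  · simp [hempty]
  set j₀ := Nat.find hne
  have hlt : ∀ j ∈ P, j ∈ Finset.Ico j₀ (j₀ + m) := by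
    intro j hj
    refine Finset.mem_Ico.2 ⟨Nat.find_min' hne hj, ?_⟩
    by_contra! hjm
    have hab : a / 2 ^ j₀ < b / 2 ^ j := (Nat.find_spec hne).1.trans hj.2
    refine hab.not_ge ((div_le_div_iff₀ (by positivity) (by positivity)).2 ?_)
    calc b * 2 ^ j₀ ≤ a * 2 ^ m * 2 ^ j₀ := by gcongr
      _ = a * 2 ^ (j₀ + m) := by ring
      _ ≤ a * 2 ^ j := by gcongr; norm_num
  calc ∑' j, P.indicator (1 : ℕ → ENNReal) j
      = ∑ j ∈ Finset.Ico j₀ (j₀ + m), P.indicator (1 : ℕ → ENNReal) j :=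
        tsum_eq_sum fun j hj => indicator_of_notMem (fun h => hj (hlt j h)) _
    _ ≤ ∑ _j ∈ Finset.Ico j₀ (j₀ + m), (1 : ENNReal) :=
        Finset.sum_le_sum fun _ _ => indicator_le_self' (by simp) _
    _ = m := by simp

lemma tsum_measure_dyadicWindow_le [MeasurableSpace X] (ν : Measure X) {f : X → ℝ}
    (hf : Measurable f) (ha : 0 < a) {m : ℕ} (hb : b ≤ a * 2 ^ m) {B : Set X}
    (hB : MeasurableSet B) (hfB : ∀ x, f x < b → x ∈ B) :
    ∑' j : ℕ, ν {x | a / 2 ^ j < f x ∧ f x < b / 2 ^ j} ≤ m * ν B := by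
  refine tsum_measure_le_of_overlapCount_le ν
    (fun j => (measurableSet_lt measurable_const hf).inter (measurableSet_lt hf measurable_const))
    hB (fun j x hx => ?_) (overlapCount_dyadicWindow_le f ha hb)
  have hb0 : 0 < b := by
    have := hx.1.trans hx.2
    have hpow : (0 : ℝ) < 2 ^ j := by positivity
    rw [div_lt_div_iff_of_pos_right hpow] at this
    exact ha.trans this
  exact hfB x (hx.2.trans_le (div_le_self hb0.le (one_le_pow₀ (by norm_num))))

end DyadicWindow

section Growth

variable {X : Type*} [PseudoMetricSpace X] [MeasurableSpace X]

/-- `ν` has growth of degree `n` with constant `C`: closed balls of radius `r` have measure at most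
`C rⁿ`. This is the upper half of `n`-AD-regularity, imposed at all points and all scales. -/
def HasGrowth (ν : Measure X) (n : ℕ) (C : ℝ) : Prop :=
  ∀ x : X, ∀ r : ℝ, 0 < r → ν (closedBall x r) ≤ ENNReal.ofReal (C * r ^ n)

variable [OpensMeasurableSpace X] {ν : Measure X} {n : ℕ} {C c : ℝ}

-- A Vitali subfamily of the balls `closedBall x (R + r)` yields pairwise disjoint balls of `W`.
lemma HasGrowth.measure_le_of_forall_exists_ball [SecondCountableTopology X]
    (hν : HasGrowth ν n C) (hC : 0 ≤ C) (hc : 0 < c) {R r : ℝ} (hR : 0 ≤ R) (hr : 0 < r)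
    {S W : Set X} (h : ∀ x ∈ S, ∃ y, dist y x ≤ R ∧ ball y r ⊆ W ∧
      ENNReal.ofReal (c * r ^ n) ≤ ν (ball y r)) :
    ν S ≤ ENNReal.ofReal (C / c * (5 * (R + r) / r) ^ n) * ν W := by
  choose! y hyx hyW hyν using h
  obtain ⟨u, huS, hdisj, hcov⟩ := Vitali.exists_disjoint_subfamily_covering_enlargement_closedBall
    S (fun x => x) (fun _ => R + r) (R + r) (fun _ _ => le_rfl) 5 (by norm_num)
  have hsub : ∀ x ∈ u, ball (y x) r ⊆ closedBall x (R + r) := fun x hx =>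
    ball_subset_closedBall.trans (closedBall_subset_closedBall' (by linarith [hyx x (huS hx)]))
  have hballs : u.PairwiseDisjoint fun x => ball (y x) r := fun a ha b hb hab =>
    (hdisj ha hb hab).mono (hsub a ha) (hsub b hb)
  have hcount : u.Countable := hballs.countable_of_isOpen (fun _ _ => isOpen_ball)
    (fun x _ => ⟨y x, mem_ball_self hr⟩)
  have hS : S ⊆ ⋃ x ∈ u, closedBall x (5 * (R + r)) := fun x hx => by
    obtain ⟨z, hz, hxz⟩ := hcov x hx
    exact mem_biUnion hz (hxz (mem_closedBall_self (by positivity)))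
  have hball : ∀ x ∈ u, ν (closedBall x (5 * (R + r))) ≤
      ENNReal.ofReal (C / c * (5 * (R + r) / r) ^ n) * ν (ball (y x) r) := fun x hx => by
    refine (hν _ _ (by positivity)).trans (le_trans ?_ (mul_le_mul_right (hyν x (huS hx)) _))
    rw [← ENNReal.ofReal_mul (by positivity)]
    refine ENNReal.ofReal_le_ofReal (le_of_eq ?_)
    rw [div_pow]
    field_simp
  calc ν S ≤ ν (⋃ x ∈ u, closedBall x (5 * (R + r))) := measure_mono hS
    _ ≤ ∑' x : u, ν (closedBall (x : X) (5 * (R + r))) := measure_biUnion_le ν hcount _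
    _ ≤ ∑' x : u, ENNReal.ofReal (C / c * (5 * (R + r) / r) ^ n) * ν (ball (y x) r) :=
        ENNReal.tsum_le_tsum fun x => hball x x.2
    _ = ENNReal.ofReal (C / c * (5 * (R + r) / r) ^ n) * ν (⋃ x ∈ u, ball (y x) r) := by
        rw [ENNReal.tsum_mul_left, measure_biUnion hcount hballs (fun _ _ => measurableSet_ball)]
    _ ≤ _ := by
        gcongr
        exact iUnion₂_subset fun x hx => hyW x (huS hx)

/-- The points of `K` that see, within distance `R`, a point of `Y` at distance more than `r`
from `K`. -/
def porousPart (Y K : Set X) (R r : ℝ) : Set X :=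
  {x ∈ K | ∃ y ∈ Y, dist y x ≤ R ∧ r < infDist y K}

lemma HasGrowth.measure_porousPart_le [SecondCountableTopology X] (hν : HasGrowth ν n C)
    (hC : 0 ≤ C) (hc : 0 < c) {Y K : Set X} {R r : ℝ} (hR : 0 ≤ R) (hr : 0 < r)
    (hY : ∀ y ∈ Y, ENNReal.ofReal (c * (r / 2) ^ n) ≤ ν (ball y (r / 2))) :
    ν (porousPart Y K R r) ≤ ENNReal.ofReal (C / c * (5 * (R + r / 2) / (r / 2)) ^ n) *
      ν {x | r / 2 < infDist x K ∧ infDist x K < R + r} := by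
  refine hν.measure_le_of_forall_exists_ball hC hc hR (half_pos hr) ?_
  rintro x ⟨hx, y, hyY, hyx, hyK⟩
  refine ⟨y, hyx, fun z hz => ?_, hY y hyY⟩
  have hzy := mem_ball.1 hz
  constructor
  · linarith [infDist_le_infDist_add_dist (s := K) (x := y) (y := z), dist_comm y z]
  · linarith [infDist_le_dist_of_mem (x := z) hx, dist_triangle z y x]

variable (X) in
lemma exists_tsum_measure_porousPart_le [SecondCountableTopology X] (n : ℕ) (hC : 0 < C)
    (hc : 0 < c) {H α : ℝ} (hH : 0 < H) (hα : 0 < α) (hα1 : α ≤ 1) :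
    ∃ C' : ℝ, 0 < C' ∧ ∀ (ν : Measure X) (Y K : Set X) (x₀ : X) (ℓ : ℝ), 0 < ℓ →
      HasGrowth ν n C →
      (∀ y ∈ Y, ∀ s : ℝ, 0 < s → s ≤ ℓ → ENNReal.ofReal (c * s ^ n) ≤ ν (ball y s)) →
      K ⊆ ball x₀ ℓ →
      ∑' j : ℕ, ν (porousPart Y K (H * (ℓ / 2 ^ j)) (α * (ℓ / 2 ^ j))) ≤
        ENNReal.ofReal (C' * ℓ ^ n) := by
  obtain ⟨m, hm⟩ : ∃ m : ℕ, (H + α) / (α / 2) < 2 ^ m := pow_unbounded_of_one_lt _ one_lt_two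
  set A := C / c * (5 * (H + α / 2) / (α / 2)) ^ n with hA
  refine ⟨A * ((m + 1) * (C * (H + α + 1) ^ n)), by positivity, ?_⟩
  intro ν Y K x₀ ℓ hℓ hν hY hK
  obtain rfl | hKne := K.eq_empty_or_nonempty
  · simp [porousPart]
  have hlayer : ∀ j : ℕ, ν (porousPart Y K (H * (ℓ / 2 ^ j)) (α * (ℓ / 2 ^ j))) ≤
      ENNReal.ofReal A * ν {x | α / 2 * ℓ / 2 ^ j < infDist x K ∧
        infDist x K < (H + α) * ℓ / 2 ^ j} := fun j => by
    have ht : 0 < ℓ / 2 ^ j := by positivity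
    have htℓ : ℓ / 2 ^ j ≤ ℓ := div_le_self hℓ.le (one_le_pow₀ (by norm_num))
    have hratio : 5 * (H * (ℓ / 2 ^ j) + α * (ℓ / 2 ^ j) / 2) / (α * (ℓ / 2 ^ j) / 2) =
        5 * (H + α / 2) / (α / 2) := by field_simp
    have hinner : α * (ℓ / 2 ^ j) / 2 = α / 2 * ℓ / 2 ^ j := by ring
    have houter : H * (ℓ / 2 ^ j) + α * (ℓ / 2 ^ j) = (H + α) * ℓ / 2 ^ j := by ring
    have := hν.measure_porousPart_le hC.le hc (K := K) (R := H * (ℓ / 2 ^ j)) (by positivity)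
      (by positivity) fun y hy => hY y hy (α * (ℓ / 2 ^ j) / 2) (by positivity) (by nlinarith)
    rwa [hratio, hinner, houter] at this
  have hbounded : ∀ x, infDist x K < (H + α) * ℓ → x ∈ closedBall x₀ ((H + α + 1) * ℓ) := by
    intro x hx
    obtain ⟨k, hk, hxk⟩ := (infDist_lt_iff hKne).1 hx
    have := mem_ball.1 (hK hk)
    exact mem_closedBall.2 (by linarith [dist_triangle x k x₀])
  have hwidth : (H + α) * ℓ ≤ α / 2 * ℓ * 2 ^ m := by
    rw [div_lt_iff₀ (by positivity)] at hm; nlinarith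
  calc ∑' j : ℕ, ν (porousPart Y K (H * (ℓ / 2 ^ j)) (α * (ℓ / 2 ^ j)))
      ≤ ∑' j : ℕ, ENNReal.ofReal A * ν {x | α / 2 * ℓ / 2 ^ j < infDist x K ∧
          infDist x K < (H + α) * ℓ / 2 ^ j} := ENNReal.tsum_le_tsum hlayer
    _ ≤ ENNReal.ofReal A * (m * ν (closedBall x₀ ((H + α + 1) * ℓ))) := by
        rw [ENNReal.tsum_mul_left]
        gcongr
        exact tsum_measure_dyadicWindow_le ν measurable_infDist (by positivity) hwidth
          measurableSet_closedBall hbounded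
    _ ≤ ENNReal.ofReal A * (ENNReal.ofReal (m + 1) *
          ENNReal.ofReal (C * ((H + α + 1) * ℓ) ^ n)) := by
        gcongr
        · rw [← ENNReal.ofReal_natCast]; exact ENNReal.ofReal_le_ofReal (by linarith)
        · exact hν _ _ (by positivity)
    _ = ENNReal.ofReal (A * ((m + 1) * (C * (H + α + 1) ^ n)) * ℓ ^ n) := by
        rw [← ENNReal.ofReal_mul (by positivity), ← ENNReal.ofReal_mul (by positivity), mul_pow]
        ring_nf

end Growth

lemma exists_tendstoUniformlyOn_of_lipschitzWith {E F : Type*} [NormedAddCommGroup E]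
    [NormedAddCommGroup F] [ProperSpace F] {M : NNReal} (U : Ultrafilter ℕ) {f : ℕ → E → F}
    (hf : ∀ k, LipschitzWith M (f k)) (hf0 : ∀ k, f k 0 = 0) :
    ∃ f' : E → F, LipschitzWith M f' ∧ (∀ x, Tendsto (fun k => f k x) U (𝓝 (f' x))) ∧
      ∀ K, IsCompact K → TendstoUniformlyOn f f' U K := by
  have hlim : ∀ x, ∃ y, Tendsto (fun k => f k x) U (𝓝 y) := by
    intro x
    have hmem : ∀ k, f k x ∈ closedBall (0 : F) (M * ‖x‖) := fun k => by
      simpa [hf0 k] using (hf k).dist_le_mul x 0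
    obtain ⟨y, -, hy⟩ := (isCompact_closedBall (0 : F) (M * ‖x‖)).ultrafilter_le_nhds
      (U.map fun k => f k x) (tendsto_principal.2 (Eventually.of_forall hmem))
    exact ⟨y, hy⟩
  choose f' hf' using hlim
  refine ⟨f', LipschitzWith.of_dist_le_mul fun x y => ?_, hf', fun K hK => ?_⟩
  · exact le_of_tendsto ((hf' x).dist (hf' y))
      (Eventually.of_forall fun k => (hf k).dist_le_mul x y)
  · have hunif := (EquicontinuousOn.tendsto_uniformOnFun_iff_pi (𝔖 := {K | IsCompact K})
      (fun _ h => h) (eq_univ_of_forall fun x => mem_sUnion.2 ⟨{x}, isCompact_singleton, rfl⟩)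
      (fun K _ => (LipschitzWith.uniformEquicontinuous f M hf).equicontinuous.equicontinuousOn K)
      (U : Filter ℕ) f').2 (tendsto_pi_nhds.2 hf')
    exact UniformOnFun.tendsto_iff_tendstoUniformlyOn.1 hunif K hK

section SecondDifference

variable {E F : Type*} [NormedAddCommGroup E] [NormedAddCommGroup F] [NormedSpace ℝ F] {M : NNReal}
  {g : E → F}

/-- The symmetric second difference of `g` at `x` with increment `v`. -/
def secondDiff (g : E → F) (x v : E) : F := g (x + v) + g (x - v) - (2 : ℝ) • g x

lemma norm_secondDiff_le_add_dist_left (hg : LipschitzWith M g) (x y v : E) :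
    ‖secondDiff g x v‖ ≤ ‖secondDiff g y v‖ + 4 * M * dist x y := by
  have hplus := hg.dist_le_mul (x + v) (y + v)
  have hminus := hg.dist_le_mul (x - v) (y - v)
  have hbase := hg.dist_le_mul x y
  rw [dist_add_right, dist_eq_norm] at hplus
  rw [dist_sub_right, dist_eq_norm] at hminus
  rw [dist_eq_norm] at hbase
  calc ‖secondDiff g x v‖ = ‖secondDiff g y v + ((g (x + v) - g (y + v)) +
        (g (x - v) - g (y - v)) - (2 : ℝ) • (g x - g y))‖ := by
        congr 1; unfold secondDiff; module
    _ ≤ ‖secondDiff g y v‖ + (‖g (x + v) - g (y + v)‖ + ‖g (x - v) - g (y - v)‖ +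
        2 * ‖g x - g y‖) := by
        refine (norm_add_le _ _).trans (add_le_add_right ((norm_sub_le _ _).trans ?_) _)
        rw [norm_smul, Real.norm_ofNat]
        exact add_le_add_left (norm_add_le _ _) _
    _ ≤ ‖secondDiff g y v‖ + 4 * M * dist x y := by linarith

lemma norm_secondDiff_le_add_dist_right (hg : LipschitzWith M g) (x v w : E) :
    ‖secondDiff g x v‖ ≤ ‖secondDiff g x w‖ + 2 * M * dist v w := by
  have hplus := hg.dist_le_mul (x + v) (x + w)
  have hminus := hg.dist_le_mul (x - v) (x - w)
  rw [dist_add_left, dist_eq_norm] at hplus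
  rw [dist_sub_left, dist_eq_norm] at hminus
  calc ‖secondDiff g x v‖ = ‖secondDiff g x w + ((g (x + v) - g (x + w)) +
        (g (x - v) - g (x - w)))‖ := by congr 1; unfold secondDiff; module
    _ ≤ ‖secondDiff g x w‖ + (‖g (x + v) - g (x + w)‖ + ‖g (x - v) - g (x - w)‖) :=
        (norm_add_le _ _).trans (add_le_add_right (norm_add_le _ _) _)
    _ ≤ ‖secondDiff g x w‖ + 2 * M * dist v w := by linarith

variable [NormedSpace ℝ E]

/-- On the closed ball of center `k` and radius `r`, the map `g` is within `τ` of an affine map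
that agrees with `g` at `k`. -/
def AffineApprox (g : E → F) (k : E) (r τ : ℝ) : Prop :=
  ∃ A : E →L[ℝ] F, ∀ u ∈ closedBall k r, ‖g u - g k - A (u - k)‖ ≤ τ

lemma exists_clm_eq_of_secondDiff_eq_zero (hg : Continuous g) (hg0 : g 0 = 0)
    (h : ∀ x v, secondDiff g x v = 0) : ∃ A : E →L[ℝ] F, ∀ x, A x = g x := by
  have hmid : ∀ x v, g (x + v) + g (x - v) = (2 : ℝ) • g x := fun x v => sub_eq_zero.1 (h x v)
  have hadd : ∀ p q, g (p + q) = g p + g q := by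
    intro p q
    have hends := hmid ((1 / 2 : ℝ) • (p + q)) ((1 / 2 : ℝ) • (p + q))
    have hpq := hmid ((1 / 2 : ℝ) • (p + q)) ((1 / 2 : ℝ) • (p - q))
    rw [sub_self, hg0, add_zero, ← two_smul ℝ, smul_smul] at hends
    rw [show (1 / 2 : ℝ) • (p + q) + (1 / 2 : ℝ) • (p - q) = p by module,
      show (1 / 2 : ℝ) • (p + q) - (1 / 2 : ℝ) • (p - q) = q by module, ← hends] at hpq
    norm_num at hpq
    exact hpq.symm
  exact ⟨(AddMonoidHom.mk' g hadd).toRealLinearMap hg, fun x => rfl⟩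

-- By compactness: a limit of counterexamples has vanishing second differences, so it is affine.
variable (E F) in
lemma exists_affineApprox_of_norm_secondDiff_le [ProperSpace E] [ProperSpace F] (M : NNReal)
    {α : ℝ} (hα : 0 < α) (H : ℝ) : ∃ δ : ℝ, 0 < δ ∧ ∀ g : E → F, LipschitzWith M g →
      (∀ x v, ‖x‖ ≤ δ⁻¹ → ‖v‖ ≤ δ⁻¹ → ‖secondDiff g x v‖ ≤ δ) → AffineApprox g 0 H α := by
  by_contra! hcon
  choose g hgM hsmall hbad using fun k : ℕ => hcon _ (Nat.one_div_pos_of_nat (α := ℝ) (n := k))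
  set U : Ultrafilter ℕ := hyperfilter ℕ
  have hUtop : (U : Filter ℕ) ≤ atTop := Nat.hyperfilter_le_atTop
  obtain ⟨f, hfM, hlim, hunif⟩ := exists_tendstoUniformlyOn_of_lipschitzWith U
    (f := fun k x => g k x - g k 0) (M := M)
    (fun k => LipschitzWith.of_dist_le_mul fun x y => by
      simpa only [dist_sub_right] using (hgM k).dist_le_mul x y) (fun k => sub_self _)
  have hf0 : f 0 = 0 := tendsto_nhds_unique (hlim 0) (by simp)
  have hsecond : ∀ x v, secondDiff f x v = 0 := by
    intro x v
    have htendsto : Tendsto (fun k => secondDiff (g k) x v) U (𝓝 (secondDiff f x v)) := by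
      refine (((hlim (x + v)).add (hlim (x - v))).sub ((hlim x).const_smul (2 : ℝ))).congr
        fun k => ?_
      unfold secondDiff; module
    refine tendsto_nhds_unique htendsto (squeeze_zero_norm' ?_
      (tendsto_one_div_add_atTop_nhds_zero_nat.mono_left hUtop))
    obtain ⟨N, hN⟩ := exists_nat_ge (max ‖x‖ ‖v‖)
    filter_upwards [hUtop (eventually_ge_atTop N)] with k hk
    have hNk : (N : ℝ) ≤ (1 / ((k : ℝ) + 1))⁻¹ := by
      rw [one_div, inv_inv]
      exact (Nat.cast_le.2 hk).trans (by linarith)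
    exact hsmall k x v (((le_max_left _ _).trans hN).trans hNk)
      (((le_max_right _ _).trans hN).trans hNk)
  obtain ⟨A, hA⟩ := exists_clm_eq_of_secondDiff_eq_zero hfM.continuous hf0 hsecond
  obtain ⟨k, hk⟩ := (Metric.tendstoUniformlyOn_iff.1 (hunif _ (isCompact_closedBall 0 H)) α
    hα).exists
  refine hbad k ⟨A, fun u hu => ?_⟩
  rw [sub_zero, hA, ← dist_eq_norm, dist_comm]
  exact (hk u hu).le

lemma affineApprox_comp_homothety {t : ℝ} (ht : 0 < t) {k : E} {H α : ℝ}
    (h : AffineApprox (fun w => t⁻¹ • g (k + t • w)) 0 H α) :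
    AffineApprox g k (H * t) (α * t) := by
  obtain ⟨A, hA⟩ := h
  refine ⟨A, fun u hu => ?_⟩
  have hu' : t⁻¹ • (u - k) ∈ closedBall (0 : E) H := by
    rw [mem_closedBall_zero_iff, norm_smul, norm_inv, Real.norm_of_nonneg ht.le,
      inv_mul_le_iff₀ ht, mul_comm, ← dist_eq_norm]
    exact hu
  have hscaled := hA _ hu'
  have heq : t⁻¹ • g (k + t • t⁻¹ • (u - k)) - t⁻¹ • g (k + t • (0 : E)) -
      A (t⁻¹ • (u - k) - 0) = t⁻¹ • (g u - g k - A (u - k)) := by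
    rw [smul_inv_smul₀ ht.ne', add_sub_cancel, smul_zero, add_zero, sub_zero, map_smul]
    module
  rw [heq, norm_smul, norm_inv, Real.norm_of_nonneg ht.le, inv_mul_le_iff₀ ht] at hscaled
  linarith

variable (E F) in
lemma exists_affineApprox_of_norm_secondDiff_smul_le [ProperSpace E] [ProperSpace F] (M : NNReal)
    {α : ℝ} (hα : 0 < α) (H : ℝ) : ∃ δ : ℝ, 0 < δ ∧
      ∀ (g : E → F) (k : E) (t : ℝ), LipschitzWith M g → 0 < t →
      (∀ x v, dist x k ≤ δ⁻¹ * t → ‖v‖ ≤ δ⁻¹ → ‖secondDiff g x (t • v)‖ ≤ δ * t) →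
      AffineApprox g k (H * t) (α * t) := by
  obtain ⟨δ, hδ, happrox⟩ := exists_affineApprox_of_norm_secondDiff_le E F M hα H
  refine ⟨δ, hδ, fun g k t hg ht hsmall => affineApprox_comp_homothety ht (happrox _ ?_ ?_)⟩
  · refine LipschitzWith.of_dist_le_mul fun x y => ?_
    have := hg.dist_le_mul (k + t • x) (k + t • y)
    rw [dist_add_left, dist_smul₀, Real.norm_of_nonneg ht.le] at this
    rw [dist_smul₀, norm_inv, Real.norm_of_nonneg ht.le, inv_mul_le_iff₀ ht]
    linarith
  · intro x v hx hv
    have heq : secondDiff (fun w => t⁻¹ • g (k + t • w)) x v =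
        t⁻¹ • secondDiff g (k + t • x) (t • v) := by
      simp only [secondDiff, smul_add, smul_sub, add_assoc, add_sub_assoc]
      module
    rw [heq, norm_smul, norm_inv, Real.norm_of_nonneg ht.le, inv_mul_le_iff₀ ht, mul_comm t]
    refine hsmall _ v ?_ hv
    rw [dist_self_add_left, norm_smul, Real.norm_of_nonneg ht.le, mul_comm]
    gcongr

end SecondDifference

section Haar

variable {E : Type*} [NormedAddCommGroup E] [NormedSpace ℝ E] [FiniteDimensional ℝ E]
  [MeasurableSpace E] (ν : Measure E) [ν.IsAddHaarMeasure]

lemma measureReal_unitBall_pos : 0 < ν.real (ball 0 1) :=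
  ENNReal.toReal_pos (measure_ball_pos ν _ one_pos).ne' measure_ball_lt_top.ne

variable [BorelSpace E]

lemma measure_closedBall_eq_ofReal (x : E) {r : ℝ} (hr : 0 ≤ r) :
    ν (closedBall x r) = ENNReal.ofReal (ν.real (ball 0 1) * r ^ Module.finrank ℝ E) := by
  rw [Measure.addHaar_closedBall ν x hr, mul_comm, ENNReal.ofReal_mul measureReal_nonneg,
    ofReal_measureReal measure_ball_lt_top.ne]

lemma measure_ball_eq_ofReal (x : E) {r : ℝ} (hr : 0 < r) :
    ν (ball x r) = ENNReal.ofReal (ν.real (ball 0 1) * r ^ Module.finrank ℝ E) := by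
  rw [Measure.addHaar_ball_of_pos ν x hr, mul_comm, ENNReal.ofReal_mul measureReal_nonneg,
    ofReal_measureReal measure_ball_lt_top.ne]

lemma hasGrowth_of_isAddHaarMeasure :
    HasGrowth ν (Module.finrank ℝ E) (ν.real (ball 0 1)) :=
  fun x _ hr => (measure_closedBall_eq_ofReal ν x hr.le).le

end Haar

section TranslationEnergy

variable {E F : Type*} [NormedAddCommGroup E] [NormedAddCommGroup F] {g : E → F} {M : NNReal}
  {ρ : ℝ} {c : F}

lemma sub_eq_zero_of_notMem_closedBall (hc : ∀ x, ρ ≤ ‖x‖ → g x = c) (h : E) {x : E}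
    (hx : x ∉ closedBall 0 (ρ + ‖h‖)) : g (x + h) - g x = 0 := by
  rw [mem_closedBall_zero_iff, not_le] at hx
  have hnorm : ‖x‖ ≤ ‖x + h‖ + ‖h‖ := by simpa using norm_sub_le (x + h) h
  rw [hc (x + h) (by linarith), hc x (by linarith [norm_nonneg h]), sub_self]

variable [MeasurableSpace E] {ν : Measure E}

/-- The squared `L²`-norm of the difference between `g` and its translate by `h`. -/
def translationEnergy (ν : Measure E) (g : E → F) (h : E) : ℝ := ∫ x, ‖g (x + h) - g x‖ ^ 2 ∂ν

lemma translationEnergy_nonneg (h : E) : 0 ≤ translationEnergy ν g h :=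
  integral_nonneg fun _ => sq_nonneg _

variable [ProperSpace E] [IsFiniteMeasureOnCompacts ν]

lemma translationEnergy_le (hg : LipschitzWith M g)
    (hc : ∀ x, ρ ≤ ‖x‖ → g x = c) (h : E) :
    translationEnergy ν g h ≤ (M * ‖h‖) ^ 2 * ν.real (closedBall 0 (ρ + ‖h‖)) := by
  have hzero : ∀ x ∉ closedBall 0 (ρ + ‖h‖), ‖g (x + h) - g x‖ ^ 2 = 0 := fun x hx => by
    simp [sub_eq_zero_of_notMem_closedBall hc h hx]
  have hbound : ∀ x ∈ closedBall 0 (ρ + ‖h‖), ‖‖g (x + h) - g x‖ ^ 2‖ ≤ (M * ‖h‖) ^ 2 := by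
    intro x _
    rw [Real.norm_of_nonneg (sq_nonneg _)]
    gcongr
    simpa using hg.norm_sub_le (x + h) x
  rw [translationEnergy, ← setIntegral_eq_integral_of_forall_compl_eq_zero hzero]
  exact (Real.le_norm_self _).trans
    (norm_setIntegral_le_of_norm_le_const measure_closedBall_lt_top hbound)

lemma integrable_norm_translate_sub_sq [BorelSpace E] (hg : Continuous g)
    (hc : ∀ x, ρ ≤ ‖x‖ → g x = c) (h : E) : Integrable (fun x => ‖g (x + h) - g x‖ ^ 2) ν := by
  refine Continuous.integrable_of_hasCompactSupport (by fun_prop)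
    (HasCompactSupport.intro (isCompact_closedBall 0 (ρ + ‖h‖)) fun x hx => ?_)
  simp [sub_eq_zero_of_notMem_closedBall hc h hx]

end TranslationEnergy

section Parallelogram

variable {E F : Type*} [NormedAddCommGroup E] [NormedAddCommGroup F] [InnerProductSpace ℝ F]

lemma norm_secondDiff_sq (g : E → F) (x h : E) : ‖secondDiff g x h‖ ^ 2 =
    2 * ‖g (x + h) - g x‖ ^ 2 + 2 * ‖g (x - h + h) - g (x - h)‖ ^ 2 -
      ‖g (x - h + (h + h)) - g (x - h)‖ ^ 2 := by
  have hlaw := parallelogram_law_with_norm ℝ (g (x + h) - g x) (g x - g (x - h))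
  rw [show g (x + h) - g x + (g x - g (x - h)) = g (x + h) - g (x - h) by abel,
    show g (x + h) - g x - (g x - g (x - h)) = secondDiff g x h by
      unfold secondDiff; module] at hlaw
  rw [sub_add_cancel, ← add_assoc, sub_add_cancel]
  linarith

variable [MeasurableSpace E] [BorelSpace E] [ProperSpace E] (ν : Measure E) [ν.IsAddHaarMeasure]
  {g : E → F} {ρ : ℝ} {c : F}

lemma integrable_norm_secondDiff_sq (hg : Continuous g) (hc : ∀ x, ρ ≤ ‖x‖ → g x = c) (h : E) :
    Integrable (fun x => ‖secondDiff g x h‖ ^ 2) ν := by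
  have hint := integrable_norm_translate_sub_sq (ν := ν) hg hc
  simp_rw [norm_secondDiff_sq]
  exact (((hint h).const_mul 2).add (((hint h).comp_sub_right h).const_mul 2)).sub
    ((hint (h + h)).comp_sub_right h)

lemma integral_norm_secondDiff_sq (hg : Continuous g) (hc : ∀ x, ρ ≤ ‖x‖ → g x = c) (h : E) :
    ∫ x, ‖secondDiff g x h‖ ^ 2 ∂ν =
      4 * translationEnergy ν g h - translationEnergy ν g (h + h) := by
  have hint := integrable_norm_translate_sub_sq (ν := ν) hg hc
  have hsum : Integrable (fun x => 2 * ‖g (x + h) - g x‖ ^ 2 +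
      2 * ‖g (x - h + h) - g (x - h)‖ ^ 2) ν :=
    ((hint h).const_mul 2).add (((hint h).comp_sub_right h).const_mul 2)
  simp_rw [norm_secondDiff_sq]
  rw [integral_sub hsum ((hint (h + h)).comp_sub_right h),
    integral_add ((hint h).const_mul 2) (((hint h).comp_sub_right h).const_mul 2),
    integral_const_mul, integral_const_mul,
    integral_sub_right_eq_self (fun x => ‖g (x + h) - g x‖ ^ 2),
    integral_sub_right_eq_self (fun x => ‖g (x + (h + h)) - g x‖ ^ 2)]
  unfold translationEnergy
  ring

lemma measure_le_norm_secondDiff_le (hg : Continuous g) (hc : ∀ x, ρ ≤ ‖x‖ → g x = c) (h : E)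
    {a : ℝ} (ha : 0 < a) : ν {x | a ≤ ‖secondDiff g x h‖} ≤
      ENNReal.ofReal ((4 * translationEnergy ν g h - translationEnergy ν g (h + h)) / a ^ 2) := by
  have hint := integrable_norm_secondDiff_sq ν hg hc h
  have hset : {x | a ≤ ‖secondDiff g x h‖} = {x | a ^ 2 ≤ ‖secondDiff g x h‖ ^ 2} := by
    ext x
    exact (pow_le_pow_iff_left₀ ha.le (norm_nonneg _) two_ne_zero).symm
  rw [← integral_norm_secondDiff_sq ν hg hc, hset,
    ← ofReal_measureReal (hint.measure_ge_lt_top (by positivity)).ne]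
  refine ENNReal.ofReal_le_ofReal ((le_div_iff₀ (by positivity)).2 ?_)
  rw [mul_comm]
  exact mul_meas_ge_le_integral_of_nonneg (ae_of_all _ fun _ => sq_nonneg _) hint _

end Parallelogram

lemma tsum_ofReal_sub_le {a : ℕ → ℝ} {B : ℝ} (ha : Monotone a) (h0 : 0 ≤ a 0) (hB : ∀ j, a j ≤ B) :
    ∑' j, ENNReal.ofReal (a (j + 1) - a j) ≤ ENNReal.ofReal B := by
  refine ENNReal.tsum_le_of_sum_range_le fun J => ?_
  rw [← ENNReal.ofReal_sum_of_nonneg fun j _ => sub_nonneg.2 (ha j.le_succ), Finset.sum_range_sub]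
  exact ENNReal.ofReal_le_ofReal (by linarith [hB J])

section QuantitativeDifferentiation

variable {E F : Type*} [NormedAddCommGroup E] [NormedSpace ℝ E] [FiniteDimensional ℝ E]
  [MeasurableSpace E] [BorelSpace E] [NormedAddCommGroup F] (ν : Measure E) [ν.IsAddHaarMeasure]
  {M : NNReal}

lemma translationEnergy_smul_div_sq_le {g : E → F} (hg : LipschitzWith M g) {ρ : ℝ} (hρ : 0 ≤ ρ)
    {c : F} (hc : ∀ x, ρ ≤ ‖x‖ → g x = c) (v : E) {s : ℝ} (hs : 0 < s) :
    translationEnergy ν g (s • v) / s ^ 2 ≤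
      (M * ‖v‖) ^ 2 * (ν.real (ball 0 1) * (ρ + s * ‖v‖) ^ Module.finrank ℝ E) := by
  have henergy := translationEnergy_le (ν := ν) hg hc (s • v)
  rw [norm_smul, Real.norm_of_nonneg hs.le, measureReal_def,
    measure_closedBall_eq_ofReal ν _ (by positivity), ENNReal.toReal_ofReal (by positivity)]
    at henergy
  rw [div_le_iff₀ (by positivity)]
  linarith

variable [InnerProductSpace ℝ F]

-- With `aⱼ = E(2tⱼ v) / (2tⱼ)²`, `tⱼ = ℓ / 2ʲ`, the parallelogram identity bounds the `j`-th term
-- by a multiple of `aⱼ₊₁ - aⱼ`, while the Lipschitz condition bounds the sequence `a`.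
lemma tsum_measure_le_norm_secondDiff_le {g : E → F} (hg : LipschitzWith M g) {ℓ : ℝ} (hℓ : 0 < ℓ)
    {c : F} (hc : ∀ x, 2 * ℓ ≤ ‖x‖ → g x = c) (v : E) {γ : ℝ} (hγ : 0 < γ) :
    ∑' j : ℕ, ν {x | γ * (ℓ / 2 ^ j) ≤ ‖secondDiff g x ((ℓ / 2 ^ j) • v)‖} ≤
      ENNReal.ofReal (4 / γ ^ 2 * ((M * ‖v‖) ^ 2 *
        (ν.real (ball 0 1) * (2 * (1 + ‖v‖)) ^ Module.finrank ℝ E)) *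
          ℓ ^ Module.finrank ℝ E) := by
  set t : ℕ → ℝ := fun j => ℓ / 2 ^ j with ht
  have ht0 : ∀ j, 0 < t j := fun j => by positivity
  have htℓ : ∀ j, t j ≤ ℓ := fun j => div_le_self hℓ.le (one_le_pow₀ (by norm_num))
  have htsucc : ∀ j, 2 * t (j + 1) = t j := fun j => by simp only [ht, pow_succ]; field_simp
  set a : ℕ → ℝ := fun j => translationEnergy ν g ((2 * t j) • v) / (2 * t j) ^ 2 with ha
  have hstep : ∀ j, a (j + 1) - a j = (4 * translationEnergy ν g (t j • v) -
      translationEnergy ν g (t j • v + t j • v)) / (2 * t j) ^ 2 := fun j => by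
    have := (ht0 j).ne'
    simp only [ha, htsucc, ← two_smul ℝ (t j • v), smul_smul]
    field_simp
    ring
  have hmono : Monotone a := monotone_nat_of_le_succ fun j => sub_nonneg.1 <| by
    rw [hstep, ← integral_norm_secondDiff_sq ν hg.continuous hc]
    exact div_nonneg (integral_nonneg fun _ => sq_nonneg _) (sq_nonneg _)
  have hbound : ∀ j, a j ≤ (M * ‖v‖) ^ 2 *
      (ν.real (ball 0 1) * (2 * (1 + ‖v‖) * ℓ) ^ Module.finrank ℝ E) := fun j => by
    have htj := ht0 j
    refine (translationEnergy_smul_div_sq_le ν hg (by positivity) hc v (by positivity)).trans ?_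
    gcongr
    nlinarith [mul_le_mul_of_nonneg_right (htℓ j) (norm_nonneg v)]
  calc ∑' j : ℕ, ν {x | γ * t j ≤ ‖secondDiff g x (t j • v)‖}
      ≤ ∑' j : ℕ, ENNReal.ofReal (4 / γ ^ 2) * ENNReal.ofReal (a (j + 1) - a j) := by
        refine ENNReal.tsum_le_tsum fun j => (measure_le_norm_secondDiff_le ν hg.continuous hc _
          (mul_pos hγ (ht0 j))).trans (le_of_eq ?_)
        rw [← ENNReal.ofReal_mul (by positivity), hstep]
        have := (ht0 j).ne'
        congr 1
        field_simp
        ring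
    _ ≤ ENNReal.ofReal (4 / γ ^ 2) * ENNReal.ofReal ((M * ‖v‖) ^ 2 *
          (ν.real (ball 0 1) * (2 * (1 + ‖v‖) * ℓ) ^ Module.finrank ℝ E)) := by
        rw [ENNReal.tsum_mul_left]
        gcongr
        exact tsum_ofReal_sub_le hmono (div_nonneg (translationEnergy_nonneg _) (sq_nonneg _))
          hbound
    _ = _ := by
        rw [← ENNReal.ofReal_mul (by positivity), mul_pow _ ℓ]
        ring_nf

variable (F) in
lemma exists_tsum_measure_near_secondDiff_le (M : NNReal) (v : E) {β R : ℝ} (hβ : 0 < β)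
    (hR : 0 ≤ R) : ∃ C : ℝ, 0 ≤ C ∧ ∀ ℓ, 0 < ℓ → ∀ g : E → F, LipschitzWith M g → ∀ c,
      (∀ x, 2 * ℓ ≤ ‖x‖ → g x = c) →
      ∑' j : ℕ, ν {k | ∃ x, dist x k ≤ R * (ℓ / 2 ^ j) ∧
        β * (ℓ / 2 ^ j) < ‖secondDiff g x ((ℓ / 2 ^ j) • v)‖} ≤
        ENNReal.ofReal (C * ℓ ^ Module.finrank ℝ E) := by
  set b := β / (8 * (M + 1)) with hb
  have hb0 : 0 < b := by positivity
  have hball := measureReal_unitBall_pos ν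
  set K := (5 * (R + b) / b) ^ Module.finrank ℝ E
  refine ⟨K * (4 / (β / 2) ^ 2 * ((M * ‖v‖) ^ 2 * (ν.real (ball 0 1) *
    (2 * (1 + ‖v‖)) ^ Module.finrank ℝ E))), by positivity, fun ℓ hℓ g hg c hc => ?_⟩
  have hthick : ∀ j : ℕ, ν {k | ∃ x, dist x k ≤ R * (ℓ / 2 ^ j) ∧
        β * (ℓ / 2 ^ j) < ‖secondDiff g x ((ℓ / 2 ^ j) • v)‖} ≤
      ENNReal.ofReal K *
        ν {x | β / 2 * (ℓ / 2 ^ j) ≤ ‖secondDiff g x ((ℓ / 2 ^ j) • v)‖} := fun j => by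
    have ht : 0 < ℓ / 2 ^ j := by positivity
    generalize ℓ / 2 ^ j = t at ht
    have hratio : ν.real (ball 0 1) / ν.real (ball 0 1) * (5 * (R * t + b * t) / (b * t)) ^
        Module.finrank ℝ E = K := by
      rw [div_self hball.ne', one_mul, ← add_mul, ← mul_assoc, mul_div_mul_right _ _ ht.ne']
    rw [← hratio]
    refine (hasGrowth_of_isAddHaarMeasure ν).measure_le_of_forall_exists_ball hball.le hball
      (by positivity) (by positivity) ?_
    rintro k ⟨x, hxk, hx⟩
    refine ⟨x, hxk, fun z hz => ?_, (measure_ball_eq_ofReal ν x (by positivity)).ge⟩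
    have hclose : 4 * M * dist x z ≤ β / 2 * t := by
      calc 4 * M * dist x z ≤ 4 * (M + 1) * (b * t) := by
            gcongr
            · simp
            · exact (mem_ball'.1 hz).le
        _ = β / 2 * t := by rw [hb]; field_simp; norm_num
    change β / 2 * t ≤ ‖secondDiff g z (t • v)‖
    linarith [norm_secondDiff_le_add_dist_left hg x z (t • v)]
  refine (ENNReal.tsum_le_tsum hthick).trans ?_
  rw [ENNReal.tsum_mul_left, mul_assoc K, ENNReal.ofReal_mul (by positivity : 0 ≤ K)]
  exact mul_le_mul_right (tsum_measure_le_norm_secondDiff_le ν hg hℓ hc v (half_pos hβ)) _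

-- Second differences depend on the increment in a Lipschitz way, so a finite net of increments
-- suffices.
variable (F) in
lemma exists_tsum_measure_not_affineApprox_le [ProperSpace F] (M : NNReal) {α : ℝ} (hα : 0 < α)
    (H : ℝ) : ∃ C : ℝ, 0 ≤ C ∧ ∀ ℓ, 0 < ℓ → ∀ g : E → F, LipschitzWith M g → ∀ c,
      (∀ x, 2 * ℓ ≤ ‖x‖ → g x = c) →
      ∑' j : ℕ, ν {k | ¬ AffineApprox g k (H * (ℓ / 2 ^ j)) (α * (ℓ / 2 ^ j))} ≤
        ENNReal.ofReal (C * ℓ ^ Module.finrank ℝ E) := by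
  obtain ⟨δ, hδ, happrox⟩ := exists_affineApprox_of_norm_secondDiff_smul_le E F M hα H
  obtain ⟨V, -, hV, hnet⟩ := (isCompact_closedBall (0 : E) δ⁻¹).finite_cover_balls
    (e := δ / (4 * (M + 1))) (by positivity)
  choose C hC0 hC using fun v : E => exists_tsum_measure_near_secondDiff_le F ν M v
    (half_pos hδ) (inv_pos.2 hδ).le
  refine ⟨∑ v ∈ hV.toFinset, C v, Finset.sum_nonneg fun v _ => hC0 v, fun ℓ hℓ g hg c hc => ?_⟩
  set U : E → ℕ → Set E := fun v j => {k | ∃ x, dist x k ≤ δ⁻¹ * (ℓ / 2 ^ j) ∧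
    δ / 2 * (ℓ / 2 ^ j) < ‖secondDiff g x ((ℓ / 2 ^ j) • v)‖} with hU
  have hcover : ∀ j : ℕ, {k | ¬ AffineApprox g k (H * (ℓ / 2 ^ j)) (α * (ℓ / 2 ^ j))} ⊆
      ⋃ v ∈ hV.toFinset, U v j := by
    intro j k hk
    have ht : 0 < ℓ / 2 ^ j := by positivity
    simp only [hU]
    generalize ℓ / 2 ^ j = t at hk ht
    by_contra hnone
    refine hk (happrox g k t hg ht fun x v hx hv => ?_)
    obtain ⟨w, hw, hvw⟩ := mem_iUnion₂.1 (hnet (mem_closedBall_zero_iff.2 hv))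
    have hwsmall : ‖secondDiff g x (t • w)‖ ≤ δ / 2 * t := by
      by_contra! hlarge
      exact hnone (mem_biUnion (hV.mem_toFinset.2 hw) ⟨x, hx, hlarge⟩)
    have hnear : 2 * M * dist (t • v) (t • w) ≤ δ / 2 * t := by
      rw [dist_smul₀, Real.norm_of_nonneg ht.le]
      calc 2 * M * (t * dist v w) ≤ 2 * (M + 1) * (t * (δ / (4 * (M + 1)))) := by
            gcongr
            · simp
            · exact (mem_ball.1 hvw).le
        _ = δ / 2 * t := by field_simp; norm_num
    linarith [norm_secondDiff_le_add_dist_right hg x (t • v) (t • w)]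
  calc ∑' j : ℕ, ν {k | ¬ AffineApprox g k (H * (ℓ / 2 ^ j)) (α * (ℓ / 2 ^ j))}
      ≤ ∑' j : ℕ, ∑ v ∈ hV.toFinset, ν (U v j) := ENNReal.tsum_le_tsum fun j =>
        (measure_mono (hcover j)).trans (measure_biUnion_finset_le _ _)
    _ = ∑ v ∈ hV.toFinset, ∑' j : ℕ, ν (U v j) :=
        Summable.tsum_finsetSum fun _ _ => ENNReal.summable
    _ ≤ ∑ v ∈ hV.toFinset, ENNReal.ofReal (C v * ℓ ^ Module.finrank ℝ E) :=
        Finset.sum_le_sum fun v _ => hC v ℓ hℓ g hg c hc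
    _ = ENNReal.ofReal ((∑ v ∈ hV.toFinset, C v) * ℓ ^ Module.finrank ℝ E) := by
        rw [← ENNReal.ofReal_sum_of_nonneg fun v _ => mul_nonneg (hC0 v) (by positivity),
          ← Finset.sum_mul]

end QuantitativeDifferentiation

lemma abs_sub_floor_mul_div_le (s : ℝ) {m : ℕ} (hm : 0 < m) :
    |s - (⌊m * s⌋ : ℝ) / m| ≤ (m : ℝ)⁻¹ := by
  have hm' : (0 : ℝ) < m := by exact_mod_cast hm
  have hfract : s - (⌊m * s⌋ : ℝ) / m = Int.fract (m * s) / m := by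
    rw [← Int.self_sub_floor]; field_simp
  rw [hfract, abs_of_nonneg (div_nonneg (Int.fract_nonneg _) hm'.le), div_eq_mul_inv]
  exact mul_le_of_le_one_left (by positivity) (Int.fract_lt_one _).le

lemma exists_finset_forall_sum_smul_near {ι F : Type*} [Fintype ι] [SeminormedAddCommGroup F]
    [NormedSpace ℝ F] (v : ι → F) {M : ℝ} (hv : ∀ i, ‖v i‖ ≤ M) {m : ℕ} (hm : 0 < m) (r : ℕ) :
    ∃ Y : Finset F, Y.card ≤ (2 * (r * m) + 1) ^ Fintype.card ι ∧
      ∀ c : ι → ℝ, (∀ i, |c i| ≤ r) → ∃ y ∈ Y, ‖∑ i, c i • v i - y‖ ≤ Fintype.card ι * (M / m) := by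
  classical
  have hm' : (0 : ℝ) < m := by exact_mod_cast hm
  set J : Finset (ι → ℤ) := Fintype.piFinset fun _ => Finset.Icc (-(r * m : ℕ) : ℤ) (r * m : ℕ)
    with hJ
  refine ⟨J.image fun z => ∑ i, ((z i : ℝ) / m) • v i, Finset.card_image_le.trans (le_of_eq ?_),
    fun c hc => ⟨_, Finset.mem_image_of_mem _ (?_ : (fun i => ⌊m * c i⌋) ∈ J), ?_⟩⟩
  · rw [hJ, Fintype.card_piFinset, Finset.prod_const, Int.card_Icc, Finset.card_univ]
    congr 1
    omega
  · refine Fintype.mem_piFinset.2 fun i => Finset.mem_Icc.2 ?_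
    obtain ⟨hlow, hhigh⟩ := abs_le.1 (hc i)
    constructor
    · refine Int.le_floor.2 ?_
      push_cast
      nlinarith
    · refine Int.cast_le.1 ((Int.floor_le (m * c i)).trans ?_)
      push_cast
      nlinarith
  · rw [← Finset.sum_sub_distrib, ← nsmul_eq_mul, ← Finset.card_univ]
    refine (norm_sum_le _ _).trans (Finset.sum_le_card_nsmul _ _ _ fun i _ => ?_)
    rw [← sub_smul, norm_smul, Real.norm_eq_abs, div_eq_inv_mul M]
    exact mul_le_mul (abs_sub_floor_mul_div_le _ hm) (hv i) (norm_nonneg _) (by positivity)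

section Degenerate

variable {E F : Type*} [NormedAddCommGroup E] [NormedAddCommGroup F] [NormedSpace ℝ F]

lemma opNorm_le_of_affineApprox [NormedSpace ℝ E] {M : NNReal} {g : E → F} (hg : LipschitzWith M g)
    {k : E} {t τ : ℝ} (ht : 0 < t) {A : E →L[ℝ] F}
    (hA : ∀ u ∈ closedBall k t, ‖g u - g k - A (u - k)‖ ≤ τ) : ‖A‖ ≤ M + τ / t := by
  have hτ : 0 ≤ τ := (norm_nonneg _).trans (hA k (mem_closedBall_self ht.le))
  refine A.opNorm_le_of_unit_norm (by positivity) fun w hw => ?_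
  have htw : ‖t • w‖ = t := by rw [norm_smul, hw, Real.norm_of_nonneg ht.le, mul_one]
  have happrox := hA (k + t • w) (by rw [mem_closedBall, dist_self_add_left, htw])
  have hlip := hg.norm_sub_le (k + t • w) k
  rw [add_sub_cancel_left] at happrox hlip
  rw [htw] at hlip
  have hsub := norm_sub_norm_le (A (t • w)) (g (k + t • w) - g k)
  rw [norm_sub_rev (A (t • w))] at hsub
  have hAtw : ‖A (t • w)‖ = t * ‖A w‖ := by rw [map_smul, norm_smul, Real.norm_of_nonneg ht.le]
  rw [← mul_le_mul_iff_right₀ ht, mul_add, mul_div_cancel₀ _ ht.ne']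
  linarith

variable [InnerProductSpace ℝ E] [FiniteDimensional ℝ E]

-- Split off the direction `e`; a grid in the orthogonal complement takes care of the rest.
lemma exists_finset_forall_map_near (A : E →L[ℝ] F) {M η : ℝ} (hA : ‖A‖ ≤ M) {e : E} (he : e ≠ 0)
    (hAe : ‖A e‖ ≤ η * ‖e‖) {m : ℕ} (hm : 0 < m) (r : ℕ) :
    ∃ Y : Finset F, Y.card ≤ (2 * (r * m) + 1) ^ (Module.finrank ℝ E - 1) ∧
      ∀ w, ‖w‖ ≤ r → ∃ y ∈ Y, ‖A w - y‖ ≤ η * r + Module.finrank ℝ E * (M / m) := by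
  set W : Submodule ℝ E := ℝ ∙ e
  have hrank : 1 + Module.finrank ℝ Wᗮ = Module.finrank ℝ E := by
    rw [← W.finrank_add_finrank_orthogonal, finrank_span_singleton he]
  have hη : 0 ≤ η := nonneg_of_mul_nonneg_left ((norm_nonneg _).trans hAe) (norm_pos_iff.2 he)
  have hM : 0 ≤ M := (norm_nonneg _).trans hA
  set b := stdOrthonormalBasis ℝ Wᗮ
  obtain ⟨Y, hYcard, hY⟩ := exists_finset_forall_sum_smul_near (fun i => A (b i)) (M := M)
    (fun i => (A.le_of_opNorm_le hA _).trans
      (by rw [Submodule.norm_coe, b.norm_eq_one, mul_one])) hm r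
  rw [Fintype.card_fin] at hYcard hY
  refine ⟨Y, by rwa [← hrank, Nat.add_sub_cancel_left], fun w hw => ?_⟩
  set q : Wᗮ := Wᗮ.orthogonalProjectionOnto w
  obtain ⟨y, hyY, hy⟩ := hY (b.repr q) fun i => by
    rw [← Real.norm_eq_abs]
    calc ‖b.repr q i‖ ≤ ‖b.repr q‖ := PiLp.norm_apply_le _ _
      _ = ‖q‖ := b.repr.norm_map q
      _ ≤ r := (Wᗮ.norm_orthogonalProjectionOnto_apply_le w).trans hw
  have hq : A q = ∑ i, b.repr q i • A (b i) := by
    conv_lhs => rw [← b.sum_repr q]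
    simp
  have hp : ‖A (W.starProjection w)‖ ≤ η * r := by
    obtain ⟨s, hs⟩ := Submodule.mem_span_singleton.1 (W.starProjection_apply_mem w)
    calc ‖A (W.starProjection w)‖ = |s| * ‖A e‖ := by rw [← hs, map_smul, norm_smul]; rfl
      _ ≤ |s| * (η * ‖e‖) := by gcongr
      _ = η * ‖W.starProjection w‖ := by rw [← hs, norm_smul, Real.norm_eq_abs]; ring
      _ ≤ η * r := by gcongr; exact (W.norm_starProjection_apply_le w).trans hw
  refine ⟨y, hyY, ?_⟩
  calc ‖A w - y‖ = ‖A (W.starProjection w) + (∑ i, b.repr q i • A (b i) - y)‖ := by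
        rw [← hq, ← add_sub_assoc, ← map_add]
        congr 3
        exact (W.starProjection_add_starProjection_orthogonal w).symm
    _ ≤ η * r + Module.finrank ℝ Wᗮ * (M / m) := (norm_add_le _ _).trans (add_le_add hp hy)
    _ ≤ η * r + Module.finrank ℝ E * (M / m) := by gcongr; omega

lemma exists_finset_image_closedBall_subset {g : E → F} {k : E} {t M : ℝ} (ht : 0 < t)
    {A : E →L[ℝ] F} (hAM : ‖A‖ ≤ M) {m : ℕ} (hm : 0 < m) (r : ℕ)
    (hA : ∀ u ∈ closedBall k (r * t), ‖g u - g k - A (u - k)‖ ≤ (m : ℝ)⁻¹ * t) {e : E}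
    (hAe : ‖A e‖ < (m : ℝ)⁻¹ * ‖e‖) :
    ∃ Y : Finset F, Y.card ≤ (2 * (r * m) + 1) ^ (Module.finrank ℝ E - 1) ∧
      g '' closedBall k (r * t) ⊆
        ⋃ y ∈ Y, closedBall y ((r + 1 + Module.finrank ℝ E * M) / m * t) := by
  classical
  have he : e ≠ 0 := by rintro rfl; simp at hAe
  obtain ⟨Y, hYcard, hY⟩ := exists_finset_forall_map_near A hAM he hAe.le hm r
  refine ⟨Y.image fun y => g k + t • y, Finset.card_image_le.trans hYcard, ?_⟩
  rintro _ ⟨u, hu, rfl⟩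
  obtain ⟨y, hyY, hy⟩ := hY (t⁻¹ • (u - k)) (by
    rw [norm_smul, norm_inv, Real.norm_of_nonneg ht.le, ← dist_eq_norm, inv_mul_le_iff₀ ht,
      mul_comm]
    exact hu)
  refine mem_biUnion (Finset.mem_image_of_mem _ hyY) (mem_closedBall_iff_norm.2 ?_)
  calc ‖g u - (g k + t • y)‖ = ‖(g u - g k - A (u - k)) + t • (A (t⁻¹ • (u - k)) - y)‖ := by
        rw [map_smul, smul_sub, smul_inv_smul₀ ht.ne']; congr 1; abel
    _ ≤ (m : ℝ)⁻¹ * t + t * ((m : ℝ)⁻¹ * r + Module.finrank ℝ E * (M / m)) := by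
        refine (norm_add_le _ _).trans (add_le_add (hA u hu) ?_)
        rw [norm_smul, Real.norm_of_nonneg ht.le]
        gcongr
    _ = (r + 1 + Module.finrank ℝ E * M) / m * t := by field_simp; ring

variable (E F) in
lemma exists_measure_image_closedBall_le [MeasurableSpace F] (M : NNReal) (r : ℕ) {C κ : ℝ}
    (hC : 0 < C) (hκ : 0 < κ) :
    ∃ δ : ℝ, 0 < δ ∧ ∀ μ : Measure F, HasGrowth μ (Module.finrank ℝ E) C →
      ∀ (g : E → F) (k : E) (t : ℝ) (A : E →L[ℝ] F) (e : E), 0 < t → ‖A‖ ≤ M →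
      (∀ u ∈ closedBall k (r * t), ‖g u - g k - A (u - k)‖ ≤ δ * t) → ‖A e‖ < δ * ‖e‖ →
      μ (g '' closedBall k (r * t)) ≤ ENNReal.ofReal (κ * t ^ Module.finrank ℝ E) := by
  set n := Module.finrank ℝ E
  set K : ℝ := r + 1 + n * M
  obtain ⟨m, hm⟩ := exists_nat_gt ((2 * r + 1) ^ (n - 1) * C * K ^ n / κ)
  have hm0 : (0 : ℝ) < m := lt_of_le_of_lt (by positivity) hm
  refine ⟨(m : ℝ)⁻¹, by positivity, fun μ hμ g k t A e ht hAM hA hAe => ?_⟩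
  have hn : 0 < n := Module.finrank_pos_iff_exists_ne_zero.2 ⟨e, by rintro rfl; simp at hAe⟩
  obtain ⟨Y, hYcard, hcover⟩ :=
    exists_finset_image_closedBall_subset ht hAM (Nat.cast_pos.1 hm0) r hA hAe
  have hcard : (Y.card : ℝ) ≤ ((2 * r + 1) * m) ^ (n - 1) := by
    calc (Y.card : ℝ) ≤ ((2 * (r * m) + 1 : ℕ) : ℝ) ^ (n - 1) := by exact_mod_cast hYcard
      _ ≤ ((2 * r + 1) * m) ^ (n - 1) := by
          have hm1 : (1 : ℝ) ≤ m := by exact_mod_cast Nat.cast_pos.1 hm0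
          push_cast
          gcongr
          linarith
  have hreal : (Y.card : ℝ) * (C * (K / m * t) ^ n) ≤ κ * t ^ n := by
    calc (Y.card : ℝ) * (C * (K / m * t) ^ n)
        ≤ ((2 * r + 1) * m) ^ (n - 1) * (C * (K / m * t) ^ n) := by gcongr
      _ = ((2 * r + 1) ^ (n - 1) * C * K ^ n) / m * t ^ n := by
          rw [mul_pow, mul_pow, div_pow, ← pow_sub_one_mul hn.ne' (m : ℝ)]
          field_simp
      _ ≤ κ * t ^ n := by
          gcongr
          rw [div_lt_iff₀ hκ] at hm
          rw [div_le_iff₀ hm0]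
          linarith
  calc μ (g '' closedBall k (r * t))
      ≤ ∑ y ∈ Y, μ (closedBall y (K / m * t)) :=
        (measure_mono hcover).trans (measure_biUnion_finset_le _ _)
    _ ≤ ∑ _y ∈ Y, ENNReal.ofReal (C * (K / m * t) ^ n) :=
        Finset.sum_le_sum fun _ _ => hμ _ _ (by positivity)
    _ = ENNReal.ofReal (Y.card * (C * (K / m * t) ^ n)) := by
        rw [Finset.sum_const, nsmul_eq_mul, ← ENNReal.ofReal_natCast,
          ← ENNReal.ofReal_mul (by positivity)]
    _ ≤ ENNReal.ofReal (κ * t ^ n) := ENNReal.ofReal_le_ofReal hreal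

end Degenerate

lemma measure_image_le_of_forall_closedBall {E Y : Type*} [NormedAddCommGroup E] [NormedSpace ℝ E]
    [FiniteDimensional ℝ E] [MeasurableSpace E] [BorelSpace E] (ν : Measure E) [ν.IsAddHaarMeasure]
    [MeasurableSpace Y] (μ : Measure Y) {κ ℓ : ℝ} (hκ : 0 < κ) (hℓ : 0 < ℓ) (g : E → Y) {S : Set E}
    (hS : S ⊆ ball 0 ℓ) (h : ∀ k ∈ S, ∃ t, 0 < t ∧ t ≤ ℓ ∧
      μ (g '' closedBall k (5 * t)) ≤ ENNReal.ofReal (κ * t ^ Module.finrank ℝ E)) :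
    μ (g '' S) ≤ ENNReal.ofReal (κ * (2 * ℓ) ^ Module.finrank ℝ E) := by
  choose! t ht0 htℓ hμ using h
  obtain ⟨u, huS, hdisj, hcov⟩ := Vitali.exists_disjoint_subfamily_covering_enlargement_closedBall
    S (fun k => k) t ℓ htℓ 5 (by norm_num)
  have hcount : u.Countable := hdisj.countable_of_nonempty_interior fun a ha =>
    (nonempty_ball.2 (ht0 a (huS ha))).mono ball_subset_interior_closedBall
  have hcover : g '' S ⊆ ⋃ b ∈ u, g '' closedBall b (5 * t b) := by
    rintro _ ⟨k, hk, rfl⟩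
    obtain ⟨b, hb, hkb⟩ := hcov k hk
    exact mem_biUnion hb ⟨k, hkb (mem_closedBall_self (ht0 k hk).le), rfl⟩
  have hball := measureReal_unitBall_pos ν
  have hterm : ∀ b : u, μ (g '' closedBall (b : E) (5 * t b)) ≤
      ENNReal.ofReal (κ / ν.real (ball 0 1)) * ν (closedBall (b : E) (t b)) := fun b => by
    refine (hμ b (huS b.2)).trans (le_of_eq ?_)
    rw [measure_closedBall_eq_ofReal ν _ (ht0 b (huS b.2)).le, ← ENNReal.ofReal_mul (by positivity)]
    congr 1
    field_simp
  calc μ (g '' S) ≤ ∑' b : u, μ (g '' closedBall (b : E) (5 * t b)) :=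
        (measure_mono hcover).trans (measure_biUnion_le μ hcount _)
    _ ≤ ENNReal.ofReal (κ / ν.real (ball 0 1)) * ∑' b : u, ν (closedBall (b : E) (t b)) := by
        rw [← ENNReal.tsum_mul_left]
        exact ENNReal.tsum_le_tsum hterm
    _ = ENNReal.ofReal (κ / ν.real (ball 0 1)) * ν (⋃ b ∈ u, closedBall b (t b)) := by
        rw [measure_biUnion hcount hdisj fun b _ => measurableSet_closedBall]
    _ ≤ ENNReal.ofReal (κ / ν.real (ball 0 1)) * ν (closedBall 0 (2 * ℓ)) := by
        gcongr
        refine iUnion₂_subset fun b hb => closedBall_subset_closedBall' ?_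
        have := mem_ball.1 (hS (huS hb))
        linarith [htℓ b (huS hb)]
    _ = ENNReal.ofReal (κ * (2 * ℓ) ^ Module.finrank ℝ E) := by
        rw [measure_closedBall_eq_ofReal ν _ (by positivity), ← ENNReal.ofReal_mul (by positivity)]
        congr 1
        field_simp

lemma inv_card_pow_le_infinitePi_uniform {ι : Type*} [Fintype ι] [Nonempty ι] [MeasurableSpace ι]
    [MeasurableSingletonClass ι] {J : Set ℕ} {N : ℕ} (hJ : J.encard ≤ N) (a : ℕ → ι) :
    ((Fintype.card ι : ENNReal) ^ N)⁻¹ ≤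
      Measure.infinitePi (fun _ : ℕ => (PMF.uniformOfFintype ι).toMeasure)
        {ρ | ∀ j ∈ J, a j = ρ j} := by
  have hfin : J.Finite := finite_of_encard_le_coe hJ
  have hset : {ρ : ℕ → ι | ∀ j ∈ J, a j = ρ j} = (hfin.toFinset : Set ℕ).pi fun j => {a j} := by
    ext ρ
    simp [Set.mem_pi, eq_comm]
  have hcard : hfin.toFinset.card ≤ N := by
    rw [hfin.encard_eq_coe_toFinset_card] at hJ
    exact_mod_cast hJ
  rw [hset, Measure.infinitePi_pi _ fun _ _ => measurableSet_singleton _]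
  simp only [PMF.toMeasure_apply_singleton _ _ (measurableSet_singleton _),
    PMF.uniformOfFintype_apply, Finset.prod_const, ← ENNReal.inv_pow]
  gcongr
  exact_mod_cast Fintype.card_pos

lemma encard_le_of_overlapCount_le {X : Type*} {B : ℕ → Set X} {x : X} {N : ℕ}
    (h : overlapCount B x ≤ N) : {j | x ∈ B j}.encard ≤ N := by
  rw [overlapCount_eq_encard] at h
  exact_mod_cast h

lemma measurableSet_forall_mem_imp_eq {X ι : Type*} [MeasurableSpace X] [Countable ι]
    [MeasurableSpace ι] [MeasurableSingletonClass ι] {B : ℕ → Set X}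
    (hB : ∀ j, MeasurableSet (B j)) {f g : ℕ → X → ι} (hf : ∀ j, Measurable (f j))
    (hg : ∀ j, Measurable (g j)) : MeasurableSet {x | ∀ j, x ∈ B j → f j x = g j x} := by
  have heq : {x | ∀ j, x ∈ B j → f j x = g j x} = ⋂ j, ((B j)ᶜ ∪ {x | f j x = g j x}) := by
    ext x; simp [imp_iff_not_or]
  rw [heq]
  exact MeasurableSet.iInter fun j => (hB j).compl.union (measurableSet_eq_fun (hf j) (hg j))

section Coding

variable {X ι : Type*} [MeasurableSpace X] [Fintype ι] [Nonempty ι] [MeasurableSpace ι]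
  [MeasurableSingletonClass ι] (ν : Measure X) {B : ℕ → Set X} {lab : ℕ → X → ι} {N : ℕ}

-- Choose the letters `ρ j` independently and uniformly at random: a given point is kept with
-- probability at least `(card ι)⁻ᴺ`, so some choice keeps that proportion of the mass.
lemma exists_measure_univ_le_card_pow_mul [IsFiniteMeasure ν] (hB : ∀ j, MeasurableSet (B j))
    (hlab : ∀ j, Measurable (lab j)) (hN : ∀ᵐ x ∂ν, overlapCount B x ≤ N) :
    ∃ ρ : ℕ → ι, ν univ ≤ (Fintype.card ι : ENNReal) ^ N *
      ν {x | ∀ j, x ∈ B j → lab j x = ρ j} := by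
  set P : Measure (ℕ → ι) :=
    Measure.infinitePi fun _ : ℕ => (PMF.uniformOfFintype ι).toMeasure
  set G : Set ((ℕ → ι) × X) := {p | ∀ j, p.2 ∈ B j → lab j p.2 = p.1 j}
  have hG : MeasurableSet G := measurableSet_forall_mem_imp_eq
    (fun j => measurable_snd (hB j)) (fun j => (hlab j).comp measurable_snd)
    fun j => (measurable_pi_apply j).comp measurable_fst
  obtain ⟨ρ, hρ⟩ := exists_lintegral_le (μ := P) (f := fun ρ => ν (Prod.mk ρ ⁻¹' G))
    (by rw [← Measure.prod_apply hG]; exact measure_ne_top _ _)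
  refine ⟨ρ, ?_⟩
  have hcard : (Fintype.card ι : ENNReal) ^ N ≠ 0 := by simp
  rw [← ENNReal.inv_mul_le_iff hcard (by simp)]
  refine le_trans ?_ hρ
  rw [← Measure.prod_apply hG, Measure.prod_apply_symm hG, ← lintegral_const]
  refine lintegral_mono_ae ?_
  filter_upwards [hN] with x hx
  exact inv_card_pow_le_infinitePi_uniform (encard_le_of_overlapCount_le hx) fun j => lab j x

lemma exists_measure_le_card_pow_mul (hB : ∀ j, MeasurableSet (B j))
    (hlab : ∀ j, Measurable (lab j)) {K : Set X} (hK : ν K ≠ ⊤)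
    (hN : ∀ x ∈ K, overlapCount B x ≤ N) :
    ∃ ρ : ℕ → ι, ν K ≤ (Fintype.card ι : ENNReal) ^ N *
      ν {x ∈ K | ∀ j, x ∈ B j → lab j x = ρ j} := by
  have : IsFiniteMeasure (ν.restrict K) := ⟨by simpa [lt_top_iff_ne_top] using hK⟩
  obtain ⟨ρ, hρ⟩ := exists_measure_univ_le_card_pow_mul (ν.restrict K) hB hlab
    ((ae_restrict_iff (measurableSet_le (measurable_overlapCount hB) measurable_const)).2
      (ae_of_all _ hN))
  rw [Measure.restrict_apply_univ, Measure.restrict_apply (measurableSet_forall_mem_imp_eq hB hlab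
    fun j => measurable_const), inter_comm] at hρ
  exact ⟨ρ, hρ⟩

end Coding

section Labels

variable {ι : Type*}

/-- The cell of the grid of mesh `s` in which a point lies, with each integer coordinate of the
cell recorded only modulo `N`; cells with equal labels are either equal or at least about
`N * s` apart. -/
def gridLabel (N : ℕ) (s : ℝ) (x : EuclideanSpace ℝ ι) : ι → ZMod N :=
  fun i => (⌊x i / s⌋ : ℤ)

lemma floor_eq_floor_of_intCast_zmod_eq {N : ℕ} {a b : ℝ} (hab : |a - b| ≤ N - 1)
    (h : ((⌊a⌋ : ℤ) : ZMod N) = (⌊b⌋ : ℤ)) : ⌊a⌋ = ⌊b⌋ := by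
  rw [ZMod.intCast_eq_intCast_iff_dvd_sub] at h
  refine (sub_eq_zero.1 (Int.eq_zero_of_abs_lt_dvd h ?_)).symm
  rw [← Int.cast_lt (R := ℝ), Int.cast_abs, Int.cast_sub, Int.cast_natCast, abs_lt]
  have := abs_le.1 hab
  constructor <;>
    linarith [Int.floor_le a, Int.lt_floor_add_one a, Int.floor_le b, Int.lt_floor_add_one b]

lemma measurable_gridLabel (N : ℕ) (s : ℝ) :
    Measurable (gridLabel N s : EuclideanSpace ℝ ι → ι → ZMod N) :=
  measurable_pi_lambda _ fun _ => (measurable_of_countable _).comp <| Int.measurable_floor.comp <|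
    Measurable.div_const (by fun_prop) s

variable [Fintype ι]

lemma dist_le_sum_dist_apply (x y : EuclideanSpace ℝ ι) : dist x y ≤ ∑ i, dist (x i) (y i) := by
  rw [EuclideanSpace.dist_eq]
  exact Real.sqrt_le_iff.2 ⟨Finset.sum_nonneg fun _ _ => dist_nonneg,
    Finset.sum_sq_le_sq_sum_of_nonneg fun _ _ => dist_nonneg⟩

lemma dist_apply_le_dist (x y : EuclideanSpace ℝ ι) (i : ι) : dist (x i) (y i) ≤ dist x y := by
  rw [dist_eq_norm, dist_eq_norm]
  exact PiLp.norm_apply_le (x - y) i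

lemma dist_le_of_gridLabel_eq {N : ℕ} {s : ℝ} (hs : 0 < s) {x y : EuclideanSpace ℝ ι}
    (hlab : gridLabel N s x = gridLabel N s y) (hdist : dist x y ≤ (N - 1) * s) :
    dist x y ≤ Fintype.card ι * s := by
  have hcoord : ∀ i, dist (x i) (y i) ≤ s := fun i => by
    have hdiv : |x i / s - y i / s| = dist (x i) (y i) / s := by
      rw [← sub_div, abs_div, abs_of_pos hs, Real.dist_eq]
    have hfloor := floor_eq_floor_of_intCast_zmod_eq (a := x i / s) (b := y i / s)
      (by rw [hdiv, div_le_iff₀ hs]; exact (dist_apply_le_dist x y i).trans hdist)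
      (congrFun hlab i)
    have := Int.abs_sub_lt_one_of_floor_eq_floor hfloor
    rw [hdiv, div_lt_one hs] at this
    exact this.le
  calc dist x y ≤ ∑ i, dist (x i) (y i) := dist_le_sum_dist_apply x y
    _ ≤ ∑ _i : ι, s := Finset.sum_le_sum fun i _ => hcoord i
    _ = Fintype.card ι * s := by rw [Finset.sum_const, Finset.card_univ, nsmul_eq_mul]

end Labels

lemma exists_dyadic_scale {ℓ d : ℝ} (hd : 0 < d) (hdℓ : d ≤ ℓ) :
    ∃ j : ℕ, ℓ / 2 ^ j / 2 < d ∧ d ≤ ℓ / 2 ^ j := by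
  have hℓ : 0 < ℓ := hd.trans_le hdℓ
  obtain ⟨j, hlow, hhigh⟩ := exists_nat_pow_near_of_lt_one (div_pos hd hℓ)
    ((div_le_one hℓ).2 hdℓ) (y := (2 : ℝ)⁻¹) (by norm_num) (by norm_num)
  rw [lt_div_iff₀ hℓ, inv_pow, inv_mul_eq_div] at hlow
  rw [div_le_iff₀ hℓ, inv_pow, inv_mul_eq_div] at hhigh
  exact ⟨j, by rwa [div_div, ← pow_succ], hhigh⟩

lemma hausdorffMeasure_image_le_ofReal_mul {X Y : Type*} [MetricSpace X] [MetricSpace Y]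
    [MeasurableSpace X] [BorelSpace X] [MeasurableSpace Y] [BorelSpace Y] {K : NNReal} {g : X → Y}
    (hg : LipschitzWith K g) (n : ℕ) (S : Set X) :
    μH[n] (g '' S) ≤ ENNReal.ofReal ((K : ℝ) ^ n) * μH[n] S := by
  refine (hg.lipschitzOnWith.hausdorffMeasure_image_le (Nat.cast_nonneg n)).trans (le_of_eq ?_)
  rw [ENNReal.rpow_natCast, ENNReal.ofReal_pow K.coe_nonneg, ENNReal.ofReal_coe_nnreal]

section BilipschitzPiece

variable {E F : Type*} [NormedAddCommGroup E] [InnerProductSpace ℝ E] [NormedAddCommGroup F]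
  [NormedSpace ℝ F]

/-- The points around which, at some scale `ℓ / 2 ^ j`, the map `g` is within `δ * (ℓ / 2 ^ j)` of
an affine map whose linear part shrinks some vector by a factor less than `δ`. -/
def degenerateSet (g : E → F) (δ ℓ : ℝ) : Set E :=
  {k | ∃ (j : ℕ) (A : E →L[ℝ] F) (e : E),
    (∀ u ∈ closedBall k (5 * (ℓ / 2 ^ j)), ‖g u - g k - A (u - k)‖ ≤ δ * (ℓ / 2 ^ j)) ∧
      ‖A e‖ < δ * ‖e‖}

variable (E F) in
lemma exists_measure_image_degenerateSet_le [FiniteDimensional ℝ E] [MeasurableSpace E]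
    [BorelSpace E] [MeasurableSpace F] (M : NNReal) {C κ : ℝ} (hC : 0 < C) (hκ : 0 < κ) :
    ∃ δ : ℝ, 0 < δ ∧ ∀ μ : Measure F, HasGrowth μ (Module.finrank ℝ E) C → ∀ ℓ : ℝ, 0 < ℓ →
      ∀ g : E → F, LipschitzWith M g → μ (g '' (degenerateSet g δ ℓ ∩ ball 0 ℓ)) ≤
        ENNReal.ofReal (κ * ℓ ^ Module.finrank ℝ E) := by
  set n := Module.finrank ℝ E
  obtain ⟨δ, hδ, hball⟩ := exists_measure_image_closedBall_le E F (M + 1) 5 hC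
    (κ := κ / 2 ^ n) (by positivity)
  refine ⟨min δ 1, by positivity, fun μ hμ ℓ hℓ g hg => ?_⟩
  have := measure_image_le_of_forall_closedBall (Measure.addHaar : Measure E) μ
    (κ := κ / 2 ^ n) (by positivity) hℓ g (S := degenerateSet g (min δ 1) ℓ ∩ ball 0 ℓ)
    inter_subset_right ?_
  · rwa [mul_pow, div_mul_eq_mul_div, mul_div_assoc, mul_div_cancel_left₀ _ (by positivity)] at this
  rintro k ⟨⟨j, A, e, hA, hAe⟩, -⟩
  have ht : 0 < ℓ / 2 ^ j := by positivity
  refine ⟨ℓ / 2 ^ j, ht, div_le_self hℓ.le (one_le_pow₀ one_le_two),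
    hball μ hμ g k (ℓ / 2 ^ j) A e ht ?_ (fun u hu => (hA u hu).trans ?_) (hAe.trans_le ?_)⟩
  · have hop := opNorm_le_of_affineApprox hg ht fun u hu =>
      hA u (closedBall_subset_closedBall (by linarith) hu)
    rw [mul_div_cancel_right₀ _ ht.ne'] at hop
    exact hop.trans (add_le_add_right (min_le_right _ _) _)
  · gcongr; exact min_le_left _ _
  · gcongr; exact min_le_left _ _

lemma mul_dist_le_of_affineApprox {g : E → F} {δ ℓ : ℝ} (hδ : 0 < δ) (hℓ : 0 < ℓ) {j : ℕ} {k k' : E}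
    (hk : k ∉ degenerateSet g δ ℓ)
    (happrox : AffineApprox g k (5 * (ℓ / 2 ^ j)) (δ / 4 * (ℓ / 2 ^ j)))
    (hlow : ℓ / 2 ^ j / 2 < dist k' k) (hhigh : dist k' k ≤ ℓ / 2 ^ j) :
    δ / 2 * dist k' k ≤ dist (g k') (g k) := by
  obtain ⟨A, hA⟩ := happrox
  have ht : 0 < ℓ / 2 ^ j := by positivity
  have hexpand : δ * ‖k' - k‖ ≤ ‖A (k' - k)‖ := by
    by_contra! hlt
    exact hk ⟨j, A, k' - k, fun u hu => (hA u hu).trans (by gcongr; linarith), hlt⟩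
  have herror := hA k' (mem_closedBall.2 (by linarith))
  have hsub := norm_sub_norm_le (A (k' - k)) (g k' - g k)
  rw [norm_sub_rev (A (k' - k))] at hsub
  rw [dist_eq_norm] at hlow ⊢
  rw [dist_eq_norm]
  nlinarith

end BilipschitzPiece

lemma mul_dist_le_of_gridLabel_eq {n : ℕ} {F : Type*} [NormedAddCommGroup F] [NormedSpace ℝ F]
    {g : Euc n → F} {δ ℓ : ℝ} (hδ : 0 < δ) (hℓ : 0 < ℓ) {ρ : ℕ → Fin n → ZMod (2 * n + 2)}
    {K : Set (Euc n)} (hK : K ⊆ ball 0 (ℓ / 2)) (hdeg : ∀ k ∈ K, k ∉ degenerateSet g δ ℓ)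
    (hlab : ∀ k ∈ K, ∀ j, ¬AffineApprox g k (5 * (ℓ / 2 ^ j)) (δ / 4 * (ℓ / 2 ^ j)) →
      gridLabel (2 * n + 2) (ℓ / 2 ^ j / (2 * n + 1)) k = ρ j) {k k' : Euc n}
    (hk : k ∈ K) (hk' : k' ∈ K) :
    δ / 2 * dist k k' ≤ dist (g k) (g k') := by
  rcases eq_or_ne k k' with rfl | hne
  · simp
  have hdist : dist k k' ≤ ℓ := by
    linarith [mem_ball.1 (hK hk), mem_ball.1 (hK hk'), dist_triangle_right k k' 0]
  obtain ⟨j, hlow, hhigh⟩ := exists_dyadic_scale (dist_pos.2 hne) hdist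
  by_cases hk'A : AffineApprox g k' (5 * (ℓ / 2 ^ j)) (δ / 4 * (ℓ / 2 ^ j))
  · exact mul_dist_le_of_affineApprox hδ hℓ (hdeg k' hk') hk'A hlow hhigh
  by_cases hkA : AffineApprox g k (5 * (ℓ / 2 ^ j)) (δ / 4 * (ℓ / 2 ^ j))
  · rw [dist_comm k, dist_comm (g k)]
    rw [dist_comm] at hlow hhigh
    exact mul_dist_le_of_affineApprox hδ hℓ (hdeg k hk) hkA hlow hhigh
  have ht : 0 < ℓ / 2 ^ j := by positivity
  have hclose := dist_le_of_gridLabel_eq (by positivity)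
    ((hlab k hk j hkA).trans (hlab k' hk' j hk'A).symm) (hhigh.trans (le_of_eq (by
      push_cast; field_simp; ring)))
  rw [Fintype.card_fin, ← mul_div_assoc, le_div_iff₀ (by positivity)] at hclose
  nlinarith

section Existence

instance isAddHaarMeasure_hausdorffMeasure_euc (n : ℕ) :
    (μH[n] : Measure (Euc n)).IsAddHaarMeasure := by
  simpa using isAddHaarMeasure_hausdorffMeasure (E := Euc n)

lemma ofReal_sub_le_measure_image_diff {X Y : Type*} [MeasurableSpace Y] {μ : Measure Y}
    {g : X → Y} {S D : Set X} {a b : ℝ} (hS : ENNReal.ofReal a ≤ μ (g '' S))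
    (hD : μ (g '' D) ≤ ENNReal.ofReal b) (hb : 0 ≤ b) :
    ENNReal.ofReal (a - b) ≤ μ (g '' (S \ D)) := by
  rw [ENNReal.ofReal_sub _ hb, tsub_le_iff_right]
  calc ENNReal.ofReal a ≤ μ (g '' (S \ D) ∪ g '' D) := by
        rw [← image_union, sdiff_union_self]
        exact hS.trans (measure_mono (image_mono subset_union_left))
    _ ≤ μ (g '' (S \ D)) + ENNReal.ofReal b :=
        (measure_union_le _ _).trans (add_le_add_right hD _)

variable {F : Type*} [NormedAddCommGroup F] [MeasurableSpace F] [BorelSpace F]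

lemma measure_image_le_overlapCount_le {n : ℕ} {μ : Measure F} (hμ : μ ≤ μH[n]) {M : NNReal}
    {g : Euc n → F} (hg : LipschitzWith M g) {T : ℕ → Set (Euc n)} {b : ℝ}
    (hT : ∑' j, μH[n] (T j) ≤ ENNReal.ofReal b) {N : ℕ} (hN : 0 < N) :
    μ (g '' {k | (N : ENNReal) ≤ overlapCount T k}) ≤ ENNReal.ofReal (M ^ n * b / N) := by
  set R := {k | (N : ENNReal) ≤ overlapCount T k}
  have hmarkov : μH[n] R ≤ ENNReal.ofReal b / N := by
    rw [ENNReal.le_div_iff_mul_le (Or.inl (by exact_mod_cast hN.ne')) (Or.inl (by simp)), mul_comm]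
    exact (mul_measure_le_overlapCount_le _ T N).trans hT
  calc μ (g '' R) ≤ ENNReal.ofReal ((M : ℝ) ^ n) * μH[n] R :=
        (hμ _).trans (hausdorffMeasure_image_le_ofReal_mul hg n R)
    _ ≤ ENNReal.ofReal ((M : ℝ) ^ n) * (ENNReal.ofReal b / N) := by gcongr
    _ = ENNReal.ofReal (M ^ n * b / N) := by
        rw [← ENNReal.ofReal_natCast, ← ENNReal.ofReal_div_of_pos (by exact_mod_cast hN),
          ← ENNReal.ofReal_mul (by positivity), mul_div_assoc]

variable [InnerProductSpace ℝ F] [ProperSpace F]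

lemma exists_nondegenerate_subset (n : ℕ) (M : NNReal) {C θ : ℝ} (hC : 0 < C) (hθ : 0 < θ) :
    ∃ δ : ℝ, 0 < δ ∧ ∃ N : ℕ, ∀ μ : Measure F, μ ≤ μH[n] → HasGrowth μ n C → ∀ ℓ : ℝ, 0 < ℓ →
      ∀ (g : Euc n → F) (c : F), LipschitzWith M g → (∀ x, 2 * ℓ ≤ ‖x‖ → g x = c) →
      ∀ S ⊆ ball (0 : Euc n) ℓ, ENNReal.ofReal (θ * ℓ ^ n) ≤ μ (g '' S) →
      ∃ K ⊆ S, ENNReal.ofReal (θ / 2 * ℓ ^ n) ≤ μ (g '' K) ∧ ∃ T : ℕ → Set (Euc n),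
        (∀ j, MeasurableSet (T j)) ∧
        (∀ j, {k | ¬AffineApprox g k (5 * (ℓ / 2 ^ j)) (δ / 4 * (ℓ / 2 ^ j))} ⊆ T j) ∧
        ∀ k ∈ K, k ∉ degenerateSet g δ ℓ ∧ overlapCount T k ≤ N := by
  obtain ⟨δ, hδ, hdeg⟩ := exists_measure_image_degenerateSet_le (Euc n) F M hC
    (κ := θ / 4) (by positivity)
  obtain ⟨C', hC', happrox⟩ := exists_tsum_measure_not_affineApprox_le F (μH[n] : Measure (Euc n)) M
    (α := δ / 4) (by positivity) 5
  simp only [finrank_euclideanSpace_fin] at hdeg happrox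
  obtain ⟨N, hN⟩ := exists_nat_gt (4 * (M ^ n * C') / θ)
  have hN0 : (0 : ℝ) < N := lt_of_le_of_lt (by positivity) hN
  refine ⟨δ, hδ, N, fun μ hμH hμ ℓ hℓ g c hg hout S hS hθS => ?_⟩
  set T : ℕ → Set (Euc n) := fun j =>
    toMeasurable μH[n] {k | ¬AffineApprox g k (5 * (ℓ / 2 ^ j)) (δ / 4 * (ℓ / 2 ^ j))}
  set D := degenerateSet g δ ℓ ∩ ball 0 ℓ
  set R := {k | (N : ENNReal) ≤ overlapCount T k}
  have hT : ∑' j, μH[n] (T j) ≤ ENNReal.ofReal (C' * ℓ ^ n) := by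
    simp only [T, measure_toMeasurable]
    exact happrox ℓ hℓ g hg c hout
  have hR : μ (g '' R) ≤ ENNReal.ofReal (θ / 4 * ℓ ^ n) := by
    refine (measure_image_le_overlapCount_le hμH hg hT (Nat.cast_pos.1 hN0)).trans
      (ENNReal.ofReal_le_ofReal ?_)
    rw [div_lt_iff₀ hθ] at hN
    rw [div_le_iff₀ hN0]
    nlinarith [pow_pos hℓ n]
  have hDR : μ (g '' (D ∪ R)) ≤ ENNReal.ofReal (θ / 2 * ℓ ^ n) := by
    rw [image_union, show θ / 2 * ℓ ^ n = θ / 4 * ℓ ^ n + θ / 4 * ℓ ^ n by ring,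
      ENNReal.ofReal_add (by positivity) (by positivity)]
    exact (measure_union_le _ _).trans (add_le_add (hdeg μ hμ ℓ hℓ g hg) hR)
  refine ⟨S \ (D ∪ R), sdiff_subset, ?_, T, fun j => measurableSet_toMeasurable _ _,
    fun j => subset_toMeasurable _ _, fun k hk => ⟨fun hkD => hk.2 (Or.inl ⟨hkD, hS hk.1⟩),
      (not_le.1 fun hkR => hk.2 (Or.inr hkR)).le⟩⟩
  have hrest := ofReal_sub_le_measure_image_diff hθS hDR (by positivity)
  rwa [← sub_mul, sub_half] at hrest

lemma exists_antilipschitz_piece (n : ℕ) (M : NNReal) {C θ : ℝ} (hC : 0 < C) (hθ : 0 < θ) :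
    ∃ δ : ℝ, 0 < δ ∧ ∃ η : ℝ, 0 < η ∧ ∀ μ : Measure F, μ ≤ μH[n] → HasGrowth μ n C →
      ∀ ℓ : ℝ, 0 < ℓ → ∀ (g : Euc n → F) (c : F), LipschitzWith M g →
      (∀ x, 2 * ℓ ≤ ‖x‖ → g x = c) →
      ∀ S ⊆ ball (0 : Euc n) (ℓ / 2), ENNReal.ofReal (θ * ℓ ^ n) ≤ μ (g '' S) →
      ∃ K ⊆ S, ENNReal.ofReal (η * ℓ ^ n) ≤ μH[n] K ∧
        ∀ k ∈ K, ∀ k' ∈ K, δ * dist k k' ≤ dist (g k) (g k') := by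
  obtain ⟨δ, hδ, N, hnondeg⟩ := exists_nondegenerate_subset (F := F) n (M + 1) hC hθ
  set Λ : ℕ := Fintype.card (Fin n → ZMod (2 * n + 2)) with hΛ
  have hΛ0 : (0 : ℝ) < Λ := by exact_mod_cast Fintype.card_pos
  have hM : (0 : ℝ) < (M + 1 : NNReal) := by positivity
  refine ⟨δ / 2, by positivity, θ / (2 * ((M + 1 : NNReal) ^ n * Λ ^ N)), by positivity,
    fun μ hμH hμ ℓ hℓ g c hg hout S hS hθS => ?_⟩
  replace hg : LipschitzWith (M + 1) g := hg.weaken le_self_add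
  obtain ⟨K₀, hK₀S, hK₀, T, hTmeas, hT, hgood⟩ :=
    hnondeg μ hμH hμ ℓ hℓ g c hg hout S (hS.trans (ball_subset_ball (by linarith))) hθS
  obtain ⟨ρ, hρ⟩ := exists_measure_le_card_pow_mul μH[n] hTmeas
    (fun j => measurable_gridLabel (2 * n + 2) (ℓ / 2 ^ j / (2 * n + 1)))
    ((measure_mono (hK₀S.trans hS)).trans_lt measure_ball_lt_top).ne fun k hk => (hgood k hk).2
  set K : Set (Euc n) :=
    {k ∈ K₀ | ∀ j, k ∈ T j → gridLabel (2 * n + 2) (ℓ / 2 ^ j / (2 * n + 1)) k = ρ j}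
  have hKK₀ : K ⊆ K₀ := sep_subset _ _
  refine ⟨K, hKK₀.trans hK₀S, ?_, fun k hk k' hk' =>
    mul_dist_le_of_gridLabel_eq hδ hℓ (hKK₀.trans (hK₀S.trans hS))
      (fun x hx => (hgood x (hKK₀ hx)).1) (fun x hx j hxj => hx.2 j (hT j hxj)) hk hk'⟩
  have hmass := (hK₀.trans (hμH _)).trans ((hausdorffMeasure_image_le_ofReal_mul hg n K₀).trans
    (mul_le_mul_right hρ _))
  have hpos : 0 < ((M + 1 : NNReal) : ℝ) ^ n * (Λ : ℝ) ^ N := by positivity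
  rw [← hΛ, ← mul_assoc, ← ENNReal.ofReal_natCast, ← ENNReal.ofReal_pow (by positivity),
    ← ENNReal.ofReal_mul (by positivity),
    show θ / 2 * ℓ ^ n = ((M + 1 : NNReal) : ℝ) ^ n * (Λ : ℝ) ^ N *
      (θ / (2 * ((M + 1 : NNReal) ^ n * Λ ^ N)) * ℓ ^ n) by field_simp,
    ENNReal.ofReal_mul hpos.le] at hmass
  exact (ENNReal.mul_le_mul_iff_right (ENNReal.ofReal_pos.2 hpos).ne' ENNReal.ofReal_ne_top).1 hmass

end Existence

section TangentPlane

variable {E F : Type*} [NormedAddCommGroup E] [NormedSpace ℝ E] [NormedAddCommGroup F]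
  [NormedSpace ℝ F]

/-- The affine plane parametrized by `w ↦ p + A w`. With `p = g k` and `A` an approximate
derivative of `g` at `k`, it approximates the image of `g` near `g k`. -/
def tangentPlane (p : F) (A : E →L[ℝ] F) : AffineSubspace ℝ F :=
  AffineSubspace.mk' p (LinearMap.range (A : E →ₗ[ℝ] F))

lemma mem_tangentPlane {p y : F} {A : E →L[ℝ] F} : y ∈ tangentPlane p A ↔ ∃ w, A w = y - p := by
  simp [tangentPlane, AffineSubspace.mem_mk']

lemma finrank_direction_tangentPlane (p : F) {A : E →L[ℝ] F} (hA : Function.Injective A) :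
    Module.finrank ℝ (tangentPlane p A).direction = Module.finrank ℝ E := by
  rw [tangentPlane, AffineSubspace.direction_mk', LinearMap.finrank_range_of_inj hA]

lemma mul_norm_le_of_sphere {A : E →L[ℝ] F} {c t : ℝ} (ht : 0 < t)
    (hA : ∀ w, ‖w‖ = t → c * t ≤ ‖A w‖) (w : E) : c * ‖w‖ ≤ ‖A w‖ := by
  obtain rfl | hw := eq_or_ne w 0
  · simp
  have hw0 : 0 < ‖w‖ := norm_pos_iff.2 hw
  have hscale : ‖(t / ‖w‖) • w‖ = t := by
    rw [norm_smul, Real.norm_of_nonneg (by positivity), div_mul_cancel₀ _ hw0.ne']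
  have h := hA _ hscale
  rw [map_smul, norm_smul, Real.norm_of_nonneg (by positivity), div_mul_eq_mul_div,
    le_div_iff₀ hw0] at h
  nlinarith

variable {M : NNReal} {g : E → F} {K : Set E} {k : E} {A : E →L[ℝ] F} {δ R τ : ℝ}

lemma half_mul_norm_le_of_approx (hg : LipschitzWith M g) (hδ : 0 < δ) (hR : 0 < R) (hτ : 0 < τ)
    (hk : k ∈ K) (hanti : ∀ x ∈ K, ∀ y ∈ K, δ * dist x y ≤ dist (g x) (g y))
    (hK : ∀ u ∈ closedBall k R, infDist u K ≤ τ)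
    (hA : ∀ u ∈ closedBall k R, ‖g u - g k - A (u - k)‖ ≤ τ)
    (hτR : (4 * δ + 4 * M + 2) * τ ≤ δ * R) (w : E) : δ / 2 * ‖w‖ ≤ ‖A w‖ := by
  refine mul_norm_le_of_sphere hR (fun w hw => ?_) w
  have hdist : dist (k + w) k = R := by rw [dist_self_add_left, hw]
  have hu : k + w ∈ closedBall k R := hdist.le
  obtain ⟨k', hk', hkk'⟩ := (infDist_lt_iff ⟨k, hk⟩).1 ((hK _ hu).trans_lt (lt_two_mul_self hτ))
  have happrox := hA _ hu
  rw [add_sub_cancel_left] at happrox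
  have hincrement := norm_sub_norm_le (g (k + w) - g k) (A w)
  rw [← dist_eq_norm (g (k + w)) (g k)] at hincrement
  have hlow : δ * (R - 2 * τ) ≤ dist (g k') (g k) :=
    le_trans (by gcongr; linarith [dist_triangle_left (k + w) k k', dist_comm k' (k + w)])
      (hanti k' hk' k hk)
  have hlip : dist (g (k + w)) (g k') ≤ M * (2 * τ) :=
    (hg.dist_le_mul _ _).trans (by gcongr)
  linarith [dist_triangle_left (g k') (g k) (g (k + w))]

lemma infDist_tangentPlane_le (hδ : 0 < δ) (hτ : 0 < τ) (hk : k ∈ K)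
    (hanti : ∀ x ∈ K, ∀ y ∈ K, δ * dist x y ≤ dist (g x) (g y))
    (hA : ∀ u ∈ closedBall k R, ‖g u - g k - A (u - k)‖ ≤ τ) {y : F} {ρ : ℝ}
    (hy : infDist y (g '' K) ≤ τ) (hyk : dist y (g k) ≤ ρ) (hρ : ρ + 2 * τ ≤ δ * R) :
    infDist y (tangentPlane (g k) A) ≤ 3 * τ := by
  obtain ⟨_, ⟨k', hk', rfl⟩, hyk'⟩ := (infDist_lt_iff (Set.Nonempty.image g ⟨k, hk⟩)).1
    (hy.trans_lt (lt_two_mul_self hτ))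
  have hk'R : dist k' k ≤ R := by
    refine le_of_mul_le_mul_left ?_ hδ
    linarith [hanti k' hk' k hk, dist_triangle_left (g k') (g k) y]
  have happrox := hA k' hk'R
  have hmem : g k + A (k' - k) ∈ tangentPlane (g k) A :=
    mem_tangentPlane.2 ⟨k' - k, (add_sub_cancel_left _ _).symm⟩
  rw [sub_sub, ← dist_eq_norm] at happrox
  calc infDist y (tangentPlane (g k) A) ≤ dist y (g k + A (k' - k)) := infDist_le_dist_of_mem hmem
    _ ≤ dist y (g k') + dist (g k') (g k + A (k' - k)) := dist_triangle _ _ _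
    _ ≤ 3 * τ := by linarith

lemma infDist_le_of_mem_tangentPlane (hg : LipschitzWith M g) (hδ : 0 < δ) (hτ : 0 < τ)
    (hk : k ∈ K) (hK : ∀ u ∈ closedBall k R, infDist u K ≤ τ)
    (hA : ∀ u ∈ closedBall k R, ‖g u - g k - A (u - k)‖ ≤ τ)
    (hAlow : ∀ w, δ / 2 * ‖w‖ ≤ ‖A w‖) {Y : Set F} (hKY : g '' K ⊆ Y) {y : F} {ρ : ℝ}
    (hy : y ∈ tangentPlane (g k) A) (hyk : dist y (g k) ≤ ρ) (hρ : 2 * ρ ≤ δ * R) :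
    infDist y Y ≤ (1 + 2 * M) * τ := by
  obtain ⟨w, hw⟩ := mem_tangentPlane.1 hy
  have hwR : ‖w‖ ≤ R := by
    refine le_of_mul_le_mul_left ?_ hδ
    have h := hAlow w
    rw [hw, ← dist_eq_norm] at h
    linarith
  have hu : k + w ∈ closedBall k R := by rwa [mem_closedBall, dist_self_add_left]
  obtain ⟨k', hk', hkk'⟩ := (infDist_lt_iff ⟨k, hk⟩).1 ((hK _ hu).trans_lt (lt_two_mul_self hτ))
  have happrox := hA _ hu
  rw [add_sub_cancel_left, hw, sub_sub_sub_cancel_right, ← dist_eq_norm, dist_comm] at happrox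
  have hlip : dist (g (k + w)) (g k') ≤ M * (2 * τ) := (hg.dist_le_mul _ _).trans (by gcongr)
  calc infDist y Y ≤ dist y (g k') := infDist_le_dist_of_mem (hKY ⟨k', hk', rfl⟩)
    _ ≤ dist y (g (k + w)) + dist (g (k + w)) (g k') := dist_triangle _ _ _
    _ ≤ (1 + 2 * M) * τ := by linarith

end TangentPlane

section HighBeta

variable {n : ℕ} {Y : Set (Euc (n + 1))} {ε : ℝ}

lemma bbeta_le {z : Euc (n + 1)} {r a b : ℝ} (hr : 0 < r) (L : AffineSubspace ℝ (Euc (n + 1)))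
    (hL : Module.finrank ℝ L.direction = n)
    (hne : ((L : Set (Euc (n + 1))) ∩ ball z r).Nonempty) (ha : 0 ≤ a) (hb : 0 ≤ b)
    (hYL : ∀ y ∈ Y ∩ ball z r, infDist y (L : Set (Euc (n + 1))) ≤ a)
    (hLY : ∀ y ∈ (L : Set (Euc (n + 1))) ∩ ball z r, infDist y Y ≤ b)
    (hab : a + b ≤ ε * r) : bbeta n Y z r ≤ ε := by
  unfold bbeta
  refine csInf_le_of_le ⟨0, ?_⟩ ⟨L, hL, hne, rfl⟩ ?_
  · rintro _ ⟨L', -, -, rfl⟩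
    refine mul_nonneg (by positivity) (add_nonneg ?_ ?_) <;>
    exact Real.iSup_nonneg fun y => Real.iSup_nonneg fun _ => infDist_nonneg
  · rw [inv_mul_le_iff₀ hr, mul_comm r]
    refine (add_le_add ?_ ?_).trans hab
    · exact Real.iSup_le (fun y => Real.iSup_le (hYL y) ha) ha
    · exact Real.iSup_le (fun y => Real.iSup_le (hLY y) hb) hb

lemma bbeta_le_of_approx {M : NNReal} {g : Euc n → Euc (n + 1)} (hg : LipschitzWith M g)
    {K : Set (Euc n)} (hKY : g '' K ⊆ Y) {δ : ℝ} (hδ : 0 < δ)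
    (hanti : ∀ x ∈ K, ∀ y ∈ K, δ * dist x y ≤ dist (g x) (g y)) {k : Euc n} (hk : k ∈ K)
    {R τ ρ r : ℝ} (hR : 0 < R) (hτ : 0 < τ) (hK : ∀ u ∈ closedBall k R, infDist u K ≤ τ)
    (hA : AffineApprox g k R τ) (hY : ∀ y ∈ Y, dist y (g k) ≤ ρ → infDist y (g '' K) ≤ τ)
    (hτR : (4 * δ + 4 * M + 2) * τ ≤ δ * R) (hρR : ρ + 2 * τ ≤ δ * R) (hρR' : 2 * ρ ≤ δ * R)
    {z : Euc (n + 1)} (hz : dist z (g k) < r) (hzρ : dist z (g k) + r ≤ ρ)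
    (hε : (4 + 2 * M) * τ ≤ ε * r) : bbeta n Y z r ≤ ε := by
  obtain ⟨A, hA⟩ := hA
  have hAlow := half_mul_norm_le_of_approx hg hδ hR hτ hk hanti hK hA hτR
  have hinj : Function.Injective A := (injective_iff_map_eq_zero A).2 fun w hw => by
    have h := hAlow w
    rw [hw, norm_zero] at h
    exact norm_le_zero_iff.1 (nonpos_of_mul_nonpos_right h (half_pos hδ))
  have hnear : ∀ y ∈ ball z r, dist y (g k) ≤ ρ := fun y hy => by
    linarith [mem_ball.1 hy, dist_triangle y z (g k)]
  refine bbeta_le (a := 3 * τ) (b := (1 + 2 * M) * τ) (dist_nonneg.trans_lt hz)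
    (tangentPlane (g k) A) ?_ ⟨g k, mem_tangentPlane.2 ⟨0, by simp⟩, mem_ball'.2 hz⟩
    (by positivity) (by positivity) (fun y hy => ?_) (fun y hy => ?_) (by linarith)
  · rw [finrank_direction_tangentPlane _ hinj, finrank_euclideanSpace_fin]
  · exact infDist_tangentPlane_le hδ hτ hk hanti hA (hY y hy.1 (hnear y hy.2)) (hnear y hy.2) hρR
  · exact infDist_le_of_mem_tangentPlane hg hδ hτ hk hK hA hAlow hKY hy.1 (hnear y hy.2) hρR'

/-- The points within distance `t` of the center of a ball of radius `400 * t` whose bilateral beta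
number exceeds `ε`; for `t` the side length of a cube `Q`, the ball `100 B_Q` has this radius. -/
def highBetaSet (n : ℕ) (Y : Set (Euc (n + 1))) (ε t : ℝ) : Set (Euc (n + 1)) :=
  {x | ∃ z, dist z x ≤ t ∧ ε < bbeta n Y z (400 * t)}

lemma exists_image_inter_highBetaSet_subset (n : ℕ) (M : NNReal) {δ ε : ℝ} (hδ : 0 < δ)
    (hε : 0 < ε) :
    ∃ α : ℝ, 0 < α ∧ α ≤ 1 ∧ ∃ H : ℝ, 0 < H ∧ ∀ (Y : Set (Euc (n + 1)))
      (g : Euc n → Euc (n + 1)), LipschitzWith M g → ∀ K : Set (Euc n), g '' K ⊆ Y →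
      (∀ k ∈ K, ∀ k' ∈ K, δ * dist k k' ≤ dist (g k) (g k')) → ∀ t : ℝ, 0 < t →
      g '' K ∩ highBetaSet n Y ε t ⊆ porousPart Y (g '' K) (500 * t) (α * t) ∪
        g '' (porousPart univ K (H * t) (α * t) ∪ {k | ¬AffineApprox g k (H * t) (α * t)}) := by
  have hD : (0 : ℝ) < 4 * δ + 4 * M + 10 := by positivity
  set α := min ε δ / (4 * δ + 4 * M + 10) with hα
  have hα0 : 0 < α := div_pos (lt_min hε hδ) hD
  have hαD : α * (4 * δ + 4 * M + 10) = min ε δ := div_mul_cancel₀ _ hD.ne'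
  have hαδ : α * (4 * δ + 4 * M + 10) ≤ δ := hαD.le.trans (min_le_right _ _)
  have hαε : α * (4 * δ + 4 * M + 10) ≤ ε := hαD.le.trans (min_le_left _ _)
  have hαM : 0 ≤ α * M := by positivity
  have hα1 : α ≤ 1 := by
    rw [hα, div_le_one hD]
    exact (min_le_right _ _).trans (by linarith [M.2])
  refine ⟨α, hα0, hα1, 1000 / δ + 1, by positivity, ?_⟩
  rintro Y g hg K hKY hanti t ht _ ⟨⟨k, hk, rfl⟩, z, hz, hzε⟩
  by_contra hgood
  have hδH : δ * ((1000 / δ + 1) * t) = 1000 * t + δ * t := by field_simp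
  refine hzε.not_ge (bbeta_le_of_approx hg hKY hδ hanti hk (R := (1000 / δ + 1) * t) (τ := α * t)
    (ρ := 401 * t) (by positivity) (by positivity) ?_ ?_ ?_ ?_ ?_ ?_ ?_ ?_ ?_)
  · exact fun u hu => not_lt.1 fun hlt =>
      hgood (Or.inr (mem_image_of_mem g (Or.inl ⟨hk, u, mem_univ _, hu, hlt⟩)))
  · exact not_not.1 fun hA => hgood (Or.inr (mem_image_of_mem g (Or.inr hA)))
  · exact fun y hy hyk => not_lt.1 fun hlt =>
      hgood (Or.inl ⟨mem_image_of_mem g hk, y, hy, hyk.trans (by linarith), hlt⟩)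
  · rw [hδH]
    nlinarith
  · rw [hδH]
    nlinarith
  · rw [hδH]
    nlinarith
  · linarith
  · linarith
  · have hαMε : (4 + 2 * M) * α ≤ ε := by nlinarith
    nlinarith [mul_le_mul_of_nonneg_right hαMε ht.le, mul_pos hε ht]

end HighBeta

section LipschitzExtension

variable {E F : Type*} [NormedAddCommGroup E] [NormedAddCommGroup F] {M : NNReal} {g : E → F}
  {r ℓ : ℝ}

open scoped Classical in
lemma lipschitzOnWith_piecewise_const (hr : 0 < r) (hrℓ : r ≤ ℓ)
    (hg : LipschitzOnWith M g (ball 0 r)) :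
    LipschitzOnWith M ((ball 0 r).piecewise g fun _ => g 0) (ball 0 r ∪ {x | 2 * ℓ ≤ ‖x‖}) := by
  have hfar : ∀ x, 2 * ℓ ≤ ‖x‖ → x ∉ ball (0 : E) r := fun x hx hxr => by
    rw [mem_ball_zero_iff] at hxr; linarith
  have hcross : ∀ x ∈ ball (0 : E) r, ∀ y, 2 * ℓ ≤ ‖y‖ → dist (g x) (g 0) ≤ M * dist x y := by
    intro x hx y hy
    refine (hg.dist_le_mul x hx 0 (mem_ball_self hr)).trans ?_
    have hxr := mem_ball.1 hx
    have hxy := dist_triangle_left y 0 x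
    rw [dist_zero_right] at hxy
    gcongr
    linarith
  refine LipschitzOnWith.of_dist_le_mul ?_
  rintro x (hx | hx) y (hy | hy)
  · simpa [hx, hy] using hg.dist_le_mul x hx y hy
  · simpa [hx, hfar y hy] using hcross x hx y hy
  · simpa [hy, hfar x hx, dist_comm] using hcross y hy x hx
  · rw [piecewise_eq_of_notMem _ _ _ (hfar x hx), piecewise_eq_of_notMem _ _ _ (hfar y hy),
      dist_self]
    positivity

lemma exists_lipschitzWith_eqOn_ball [NormedSpace ℝ F] [FiniteDimensional ℝ F] (hr : 0 < r)
    (hrℓ : r ≤ ℓ) (hg : LipschitzOnWith M g (ball 0 r)) :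
    ∃ f : E → F, LipschitzWith (lipschitzExtensionConstant F * M) f ∧ EqOn f g (ball 0 r) ∧
      ∀ x, 2 * ℓ ≤ ‖x‖ → f x = g 0 := by
  classical
  obtain ⟨f, hf, hfg⟩ := (lipschitzOnWith_piecewise_const hr hrℓ hg).extend_finite_dimension
  refine ⟨f, hf, fun x hx => ?_, fun x hx => ?_⟩
  · rw [← hfg (Or.inl hx), piecewise_eq_of_mem _ _ _ hx]
  · rw [← hfg (Or.inr hx), piecewise_eq_of_notMem]
    rw [mem_ball_zero_iff, not_lt]
    linarith

end LipschitzExtension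

lemma ofReal_pow_mul_hausdorffMeasure_le {X Y : Type*} [MetricSpace X] [MeasurableSpace X]
    [BorelSpace X] [MetricSpace Y] [MeasurableSpace Y] [BorelSpace Y] {δ : ℝ} (hδ : 0 < δ)
    (n : ℕ) {g : X → Y} {K : Set X}
    (hanti : ∀ x ∈ K, ∀ y ∈ K, δ * dist x y ≤ dist (g x) (g y)) :
    ENNReal.ofReal (δ ^ n) * μH[n] K ≤ μH[n] (g '' K) := by
  have h : AntilipschitzWith (Real.toNNReal δ⁻¹) (K.domRestrict g) :=
    AntilipschitzWith.of_le_mul_dist fun x y => by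
      rw [Real.coe_toNNReal _ (by positivity), ← div_eq_inv_mul, le_div_iff₀ hδ, mul_comm]
      exact hanti x x.2 y y.2
  have hle := h.le_hausdorffMeasure_image (Nat.cast_nonneg n) univ
  rw [← isometry_subtype_coe.hausdorffMeasure_image (Or.inl (Nat.cast_nonneg n)), image_univ,
    image_univ, range_domRestrict, Subtype.range_coe, ENNReal.rpow_natCast] at hle
  calc ENNReal.ofReal (δ ^ n) * μH[n] K
      ≤ ENNReal.ofReal (δ ^ n) * (ENNReal.ofReal δ⁻¹ ^ n * μH[n] (g '' K)) := by gcongr; exact hle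
    _ = μH[n] (g '' K) := by
        rw [← mul_assoc, ENNReal.ofReal_pow hδ.le, ← mul_pow, ← ENNReal.ofReal_mul hδ.le,
          mul_inv_cancel₀ hδ.ne', ENNReal.ofReal_one, one_pow, one_mul]

section KeyPacking

variable {C c ε : ℝ}

lemma exists_tsum_measure_image_inter_highBetaSet_le (n : ℕ) (M : NNReal) {δ : ℝ} (hδ : 0 < δ)
    (hε : 0 < ε) (hC : 0 < C) (hc : 0 < c) :
    ∃ C' : ℝ, 0 < C' ∧ ∀ (μ : Measure (Euc (n + 1))) (Y : Set (Euc (n + 1))) (ℓ : ℝ), 0 < ℓ →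
      μ ≤ μH[n] → HasGrowth μ n C →
      (∀ y ∈ Y, ∀ s : ℝ, 0 < s → s ≤ ℓ → ENNReal.ofReal (c * s ^ n) ≤ μ (ball y s)) →
      ∀ (g : Euc n → Euc (n + 1)) (c₀ x₀ : Euc (n + 1)), LipschitzWith M g →
      (∀ x, 2 * ℓ ≤ ‖x‖ → g x = c₀) → ∀ K ⊆ ball (0 : Euc n) ℓ, g '' K ⊆ Y ∩ ball x₀ ℓ →
      (∀ k ∈ K, ∀ k' ∈ K, δ * dist k k' ≤ dist (g k) (g k')) →
      ∑' j : ℕ, μ (g '' K ∩ highBetaSet n Y ε (ℓ / 2 ^ j)) ≤ ENNReal.ofReal (C' * ℓ ^ n) := by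
  set ν : Measure (Euc n) := μH[n]
  set v := ν.real (ball 0 1)
  have hv : 0 < v := measureReal_unitBall_pos ν
  obtain ⟨α, hα, hα1, H, hH, hsub⟩ := exists_image_inter_highBetaSet_subset n M hδ hε
  obtain ⟨Ca, hCa, ha⟩ :=
    exists_tsum_measure_porousPart_le (Euc (n + 1)) n hC hc (H := 500) (by norm_num) hα hα1
  obtain ⟨Cb, hCb, hb⟩ := exists_tsum_measure_porousPart_le (Euc n) n hv hv hH hα hα1
  obtain ⟨Cc, hCc, hcc⟩ := exists_tsum_measure_not_affineApprox_le (Euc (n + 1)) ν M hα H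
  have hgrowth := hasGrowth_of_isAddHaarMeasure ν
  have hball := measure_ball_eq_ofReal ν
  simp only [finrank_euclideanSpace_fin] at hcc hgrowth hball
  refine ⟨Ca + M ^ n * (Cb + Cc), by positivity,
    fun μ Y ℓ hℓ hμH hμ hlow g c₀ x₀ hg hout K hK hKY hanti => ?_⟩
  set porousY : ℕ → Set (Euc (n + 1)) := fun j =>
    porousPart Y (g '' K) (500 * (ℓ / 2 ^ j)) (α * (ℓ / 2 ^ j))
  set porousK : ℕ → Set (Euc n) := fun j =>
    porousPart univ K (H * (ℓ / 2 ^ j)) (α * (ℓ / 2 ^ j))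
  set nonAffine : ℕ → Set (Euc n) := fun j =>
    {k | ¬AffineApprox g k (H * (ℓ / 2 ^ j)) (α * (ℓ / 2 ^ j))}
  have hterm : ∀ j, μ (g '' K ∩ highBetaSet n Y ε (ℓ / 2 ^ j)) ≤
      μ (porousY j) + ENNReal.ofReal ((M : ℝ) ^ n) * (ν (porousK j) + ν (nonAffine j)) := by
    intro j
    refine (measure_mono (hsub Y g hg K (hKY.trans inter_subset_left) hanti _
      (by positivity))).trans ((measure_union_le _ _).trans (add_le_add_right ?_ _))
    exact (hμH _).trans ((hausdorffMeasure_image_le_ofReal_mul hg n _).trans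
      (mul_le_mul_right (measure_union_le _ _) _))
  calc ∑' j : ℕ, μ (g '' K ∩ highBetaSet n Y ε (ℓ / 2 ^ j))
      ≤ ∑' j, μ (porousY j) +
          ENNReal.ofReal ((M : ℝ) ^ n) * (∑' j, ν (porousK j) + ∑' j, ν (nonAffine j)) := by
        rw [← ENNReal.tsum_add, ← ENNReal.tsum_mul_left, ← ENNReal.tsum_add]
        exact ENNReal.tsum_le_tsum hterm
    _ ≤ ENNReal.ofReal (Ca * ℓ ^ n) +
          ENNReal.ofReal ((M : ℝ) ^ n) *
            (ENNReal.ofReal (Cb * ℓ ^ n) + ENNReal.ofReal (Cc * ℓ ^ n)) := by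
        gcongr
        · exact ha μ Y _ x₀ ℓ hℓ hμ hlow (hKY.trans inter_subset_right)
        · exact hb ν univ K 0 ℓ hℓ hgrowth (fun y _ s hs _ => (hball y hs).ge) hK
        · exact hcc ℓ hℓ g hg c₀ hout
    _ = ENNReal.ofReal ((Ca + M ^ n * (Cb + Cc)) * ℓ ^ n) := by
        rw [← ENNReal.ofReal_add (by positivity) (by positivity),
          ← ENNReal.ofReal_mul (by positivity),
          ← ENNReal.ofReal_add (by positivity) (by positivity)]
        ring_nf

lemma exists_subset_tsum_measure_inter_highBetaSet_le (n : ℕ) (M : NNReal) {θ : ℝ} (hC : 0 < C)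
    (hc : 0 < c) (hθ : 0 < θ) (hε : 0 < ε) :
    ∃ η : ℝ, 0 < η ∧ ∃ C' : ℝ, 0 < C' ∧ ∀ Y : Set (Euc (n + 1)), IsClosed Y →
      HasGrowth (μH[n].restrict Y) n C → ∀ ℓ : ℝ, 0 < ℓ →
      (∀ y ∈ Y, ∀ s : ℝ, 0 < s → s ≤ ℓ → ENNReal.ofReal (c * s ^ n) ≤ μH[n].restrict Y (ball y s)) →
      ∀ (x₀ : Euc (n + 1)) (r : ℝ), 0 < r → r ≤ ℓ / 2 → ∀ g : Euc n → Euc (n + 1),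
      LipschitzOnWith M g (ball 0 r) →
      ENNReal.ofReal (θ * ℓ ^ n) ≤ μH[n] (Y ∩ ball x₀ r ∩ g '' ball 0 r) →
      ∃ E ⊆ Y ∩ ball x₀ r, ENNReal.ofReal (η * ℓ ^ n) ≤ μH[n].restrict Y E ∧
        ∑' j : ℕ, μH[n].restrict Y (E ∩ highBetaSet n Y ε (ℓ / 2 ^ j)) ≤
          ENNReal.ofReal (C' * ℓ ^ n) := by
  set M' := lipschitzExtensionConstant (Euc (n + 1)) * M
  obtain ⟨δ, hδ, η, hη, hpiece⟩ := exists_antilipschitz_piece (F := Euc (n + 1)) n M' hC hθ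
  obtain ⟨C', hC', hsum⟩ := exists_tsum_measure_image_inter_highBetaSet_le n M' hδ hε hC hc
  refine ⟨δ ^ n * η, by positivity, C', hC',
    fun Y hY hgrowth ℓ hℓ hlow x₀ r hr hrℓ g hg hθg => ?_⟩
  have hrestrict : ∀ E ⊆ Y, μH[n].restrict Y E = μH[n] E := fun E hE => by
    rw [Measure.restrict_apply' hY.measurableSet, inter_eq_left.2 hE]
  obtain ⟨f, hf, hfg, hout⟩ := exists_lipschitzWith_eqOn_ball hr (by linarith : r ≤ ℓ) hg
  set S : Set (Euc n) := {k ∈ ball 0 r | f k ∈ Y ∩ ball x₀ r}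
  have himage : Y ∩ ball x₀ r ∩ g '' ball 0 r ⊆ f '' S := by
    rintro _ ⟨hx, k, hk, rfl⟩
    rw [← hfg hk] at hx ⊢
    exact mem_image_of_mem f ⟨hk, hx⟩
  obtain ⟨K, hKS, hKη, hanti⟩ := hpiece _ Measure.restrict_le_self hgrowth ℓ hℓ f (g 0) hf hout S
    (fun k hk => ball_subset_ball hrℓ hk.1) <| by
      rw [← hrestrict _ (inter_subset_left.trans inter_subset_left)] at hθg
      exact hθg.trans (measure_mono himage)
  have hKY : f '' K ⊆ Y ∩ ball x₀ r := image_subset_iff.2 fun k hk => (hKS hk).2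
  refine ⟨f '' K, hKY, ?_, hsum _ Y ℓ hℓ Measure.restrict_le_self hgrowth hlow f (g 0) x₀ hf hout K
    (fun k hk => ball_subset_ball (by linarith) (hKS hk).1)
    (hKY.trans (inter_subset_inter_right _ (ball_subset_ball (by linarith)))) hanti⟩
  rw [hrestrict _ (hKY.trans inter_subset_left), mul_assoc, ENNReal.ofReal_mul (by positivity)]
  exact (mul_le_mul_right hKη _).trans (ofReal_pow_mul_hausdorffMeasure_le hδ n hanti)

end KeyPacking

section ADRegular

lemma exists_forall_closedBall_subset_biUnion_ball (E : Type*) [NormedAddCommGroup E]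
    [NormedSpace ℝ E] [ProperSpace E] :
    ∃ N : ℕ, ∀ (y : E) (r : ℝ), 0 < r →
      ∃ t : Finset E, t.card ≤ N ∧ closedBall y (2 * r) ⊆ ⋃ z ∈ t, ball z (r / 2) := by
  classical
  obtain ⟨t, -, ht, hcover⟩ := finite_cover_balls_of_compact
    (isCompact_closedBall (0 : E) 2) (e := 1 / 2) (by norm_num)
  refine ⟨ht.toFinset.card, fun y r hr =>
    ⟨ht.toFinset.image fun z => y + r • z, Finset.card_image_le, fun a ha => ?_⟩⟩
  obtain ⟨b, rfl⟩ : ∃ b, a = y + r • b := ⟨r⁻¹ • (a - y), by simp [hr.ne']⟩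
  have hdist : ∀ c d : E, dist (y + r • c) (y + r • d) = r * dist c d := fun c d => by
    rw [dist_add_left, dist_smul₀, Real.norm_of_nonneg hr.le]
  have hb : b ∈ closedBall (0 : E) 2 := by
    have := hdist b 0
    rw [smul_zero, add_zero] at this
    rw [mem_closedBall, this] at ha
    exact mem_closedBall.2 (by nlinarith)
  obtain ⟨z, hz, hbz⟩ := mem_iUnion₂.1 (hcover hb)
  refine mem_iUnion₂.2 ⟨y + r • z, Finset.mem_image_of_mem _ (ht.mem_toFinset.2 hz), ?_⟩
  rw [mem_ball, hdist]
  nlinarith [mem_ball.1 hbz]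

lemma exists_pos_ofReal_le_ediam_inter_closedBall_subset {X : Type*} [PseudoMetricSpace X]
    {F : Set X} (hF : ediam F ≠ 0) {x y : X} {s : ℝ} (hs : 0 < s) (hy : y ∈ F)
    (hyx : y ∈ closedBall x s) :
    ∃ r, 0 < r ∧ r ≤ s ∧ ENNReal.ofReal r ≤ ediam F ∧
      F ∩ closedBall x s ⊆ closedBall y (2 * r) := by
  obtain hsF | hFs := le_total (ENNReal.ofReal s) (ediam F)
  · refine ⟨s, hs, le_rfl, hsF, fun a ha => mem_closedBall.2 ?_⟩
    linarith [dist_triangle_right a y x, mem_closedBall.1 ha.2, mem_closedBall.1 hyx]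
  · have hfin : ediam F ≠ ⊤ := ne_top_of_le_ne_top ENNReal.ofReal_ne_top hFs
    have hpos := ENNReal.toReal_pos hF hfin
    refine ⟨_, hpos, ENNReal.toReal_le_of_le_ofReal hs.le hFs, ENNReal.ofReal_toReal_le,
      fun a ha => mem_closedBall.2 ?_⟩
    have : dist a y ≤ (ediam F).toReal := Metric.dist_le_diam_of_mem' hfin ha.1 hy
    linarith

variable {n : ℕ} {C₀ : ℝ} {F : Set (Euc (n + 1))}

lemma ADRegular.hausdorffMeasure_inter_ball_half_le (hF : ADRegular n C₀ F) {r : ℝ} (hr : 0 < r)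
    (hrF : ENNReal.ofReal r ≤ ediam F) (z : Euc (n + 1)) :
    μH[n] (F ∩ ball z (r / 2)) ≤ ENNReal.ofReal (C₀ * r ^ n) := by
  obtain hempty | ⟨w, hwF, hwz⟩ := (F ∩ ball z (r / 2)).eq_empty_or_nonempty
  · simp [hempty]
  · refine (measure_mono (inter_subset_inter_right _ (ball_subset_ball' ?_))).trans
      (hF w hwF r hr hrF).2
    linarith [mem_ball'.1 hwz]

lemma exists_forall_hasGrowth_of_ADRegular (hn : 0 < n) (hC₀ : 0 < C₀) :
    ∃ C : ℝ, 0 < C ∧ ∀ F : Set (Euc (n + 1)), IsClosed F → ADRegular n C₀ F →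
      HasGrowth (μH[n].restrict F) n C := by
  obtain ⟨N, hN⟩ := exists_forall_closedBall_subset_biUnion_ball (Euc (n + 1))
  refine ⟨(N + 1) * C₀, by positivity, fun F hFc hF x s hs => ?_⟩
  rw [Measure.restrict_apply' hFc.measurableSet, inter_comm]
  obtain hempty | ⟨y, hyF, hyx⟩ := (F ∩ closedBall x s).eq_empty_or_nonempty
  · simp [hempty]
  by_cases hdiam : ediam F = 0
  · have := Measure.nullSingletonClass_hausdorff (Euc (n + 1)) (d := (n : ℝ)) (by exact_mod_cast hn)
    have hsub : F.Subsingleton := ediam_eq_zero_iff.1 hdiam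
    simp [(hsub.anti inter_subset_left).measure_zero]
  obtain ⟨r, hr, hrs, hrF, hsub⟩ :=
    exists_pos_ofReal_le_ediam_inter_closedBall_subset hdiam hs hyF hyx
  obtain ⟨t, htN, ht⟩ := hN y r hr
  calc μH[n] (F ∩ closedBall x s) ≤ μH[n] (⋃ z ∈ t, F ∩ ball z (r / 2)) := by
        rw [← inter_iUnion₂]
        exact measure_mono (subset_inter inter_subset_left (hsub.trans ht))
    _ ≤ ∑ z ∈ t, μH[n] (F ∩ ball z (r / 2)) := measure_biUnion_finset_le _ _
    _ ≤ ∑ _z ∈ t, ENNReal.ofReal (C₀ * r ^ n) :=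
        Finset.sum_le_sum fun z _ => hF.hausdorffMeasure_inter_ball_half_le hr hrF z
    _ = ENNReal.ofReal (t.card * (C₀ * r ^ n)) := by
        rw [Finset.sum_const, nsmul_eq_mul, ENNReal.ofReal_mul (by positivity : (0 : ℝ) ≤ t.card),
          ENNReal.ofReal_natCast]
    _ ≤ ENNReal.ofReal ((N + 1) * C₀ * s ^ n) := by
        rw [mul_assoc]
        gcongr
        exact (Nat.cast_le.2 htN).trans (by linarith)

lemma ADRegular.ofReal_mul_pow_le_restrict_ball (hF : ADRegular n C₀ F) (hFc : IsClosed F)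
    {a ℓ : ℝ} (ha : 0 < a) (ha1 : a ≤ 1) (hdiam : ENNReal.ofReal (a * ℓ) ≤ ediam F)
    {y : Euc (n + 1)} (hy : y ∈ F) {s : ℝ} (hs : 0 < s) (hsℓ : s ≤ ℓ) :
    ENNReal.ofReal (C₀⁻¹ * a ^ n * s ^ n) ≤ μH[n].restrict F (ball y s) := by
  have hdiam' : ENNReal.ofReal (a * s) ≤ ediam F :=
    (ENNReal.ofReal_le_ofReal (by gcongr)).trans hdiam
  rw [mul_assoc, ← mul_pow, Measure.restrict_apply' hFc.measurableSet, inter_comm]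
  refine (hF y hy (a * s) (by positivity) hdiam').1.trans (measure_mono ?_)
  exact inter_subset_inter_right _ (ball_subset_ball (by nlinarith))

end ADRegular

section Lattice

variable {n : ℕ} {F : Set (Euc (n + 1))} {μ : Measure (Euc (n + 1))} {Cl : ℝ}

lemma sideLen_pos (q : Cube n) : 0 < sideLen q := zpow_pos two_pos _

lemma DSLattice.ofReal_mul_sideLen_le_ediam (L : DSLattice n F μ Cl) (hn : 0 < n) {C : ℝ}
    (hC : 0 < C) (hμ : HasGrowth μ n C) {q : Cube n} (hq : L.mem q) {a : ℝ} (ha : 0 < a)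
    (ha1 : a ≤ 1) (haC : C * a < Cl⁻¹) : ENNReal.ofReal (a * sideLen q) ≤ ediam F := by
  have hℓ := sideLen_pos q
  by_contra! hdiam
  have hsub : q.2 ⊆ closedBall (L.center q.2) (a * sideLen q) := fun x hx => by
    have := (edist_le_ediam_of_mem (L.subset_F _ _ hq hx)
      (L.subset_F _ _ hq (L.center_mem _ _ hq))).trans hdiam.le
    rwa [edist_dist, ENNReal.ofReal_le_ofReal_iff (by positivity)] at this
  have hle := (L.measure_lb _ _ hq).trans ((measure_mono hsub).trans (hμ _ _ (by positivity)))
  have hpow : C * a ^ n < Cl⁻¹ :=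
    (mul_le_mul_of_nonneg_left (pow_le_of_le_one ha.le ha1 hn.ne') hC.le).trans_lt haC
  change ENNReal.ofReal (Cl⁻¹ * sideLen q ^ n) ≤ _ at hle
  rw [ENNReal.ofReal_le_ofReal_iff (by positivity), mul_pow, ← mul_assoc] at hle
  exact hpow.not_ge (le_of_mul_le_mul_right hle (by positivity))

lemma DSLattice.inter_ball_center_subset (L : DSLattice n F μ Cl) {q : Cube n} (hq : L.mem q) :
    F ∩ ball (L.center q.2) (Cl⁻¹ * sideLen q) ⊆ q.2 := by
  rintro x ⟨hxF, hx⟩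
  by_contra hxq
  exact (mem_ball'.1 hx).not_ge (L.center_far _ _ hq x ⟨hxF, hxq⟩)

lemma exists_subset_cube_tsum_measure_inter_highBetaSet_le (hn : 0 < n) {C₀ θ ε : ℝ} (M : ℝ)
    (hC₀ : 0 < C₀) (hCl : 0 < Cl) (hθ : 0 < θ) (hε : 0 < ε) :
    ∃ η : ℝ, 0 < η ∧ ∃ C : ℝ, 0 < C ∧ ∀ F : Set (Euc (n + 1)), IsClosed F →
      UnifRectifiable n C₀ θ M F → ∀ (L : DSLattice n F (μH[n].restrict F) Cl) (q : Cube n),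
      L.mem q → ∃ E ⊆ q.2, ENNReal.ofReal (η * sideLen q ^ n) ≤ μH[n].restrict F E ∧
        ∑' j : ℕ, μH[n].restrict F (E ∩ highBetaSet n F ε (sideLen q / 2 ^ j)) ≤
          ENNReal.ofReal (C * sideLen q ^ n) := by
  obtain ⟨C₁, hC₁, hgrowth⟩ := exists_forall_hasGrowth_of_ADRegular hn hC₀
  set a : ℝ := min (1 / (2 * Cl)) (1 / (2 * C₁ * Cl))
  have ha0 : 0 < a := by positivity
  have haCl : a ≤ Cl⁻¹ / 2 := (min_le_left _ _).trans (le_of_eq (by field_simp))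
  have haC : C₁ * a < Cl⁻¹ := by
    have : C₁ * a ≤ C₁ * (1 / (2 * C₁ * Cl)) := by gcongr; exact min_le_right _ _
    have : C₁ * (1 / (2 * C₁ * Cl)) = Cl⁻¹ / 2 := by field_simp
    linarith [inv_pos.2 hCl]
  obtain ⟨η, hη, C, hC, hpiece⟩ := exists_subset_tsum_measure_inter_highBetaSet_le n M.toNNReal hC₁
    (c := C₀⁻¹ * a ^ n) (θ := θ * a ^ n) (by positivity) (by positivity) hε
  refine ⟨η, hη, C, hC, fun F hFc hF L q hq => ?_⟩
  have hℓ := sideLen_pos q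
  have hCl1 : Cl⁻¹ ≤ 1 := inv_le_one_of_one_le₀ L.one_le_Cl
  have hdiam := L.ofReal_mul_sideLen_le_ediam hn hC₁ (hgrowth F hFc hF.1) hq ha0 (by linarith) haC
  obtain ⟨g, hg, hθg⟩ := hF.2.2.2 _ (L.subset_F _ _ hq (L.center_mem _ _ hq)) (a * sideLen q)
    (by positivity) hdiam
  obtain ⟨E, hE, hEη, hEsum⟩ := hpiece F hFc (hgrowth F hFc hF.1) (sideLen q) hℓ
    (fun y hy s hs hsℓ =>
      hF.1.ofReal_mul_pow_le_restrict_ball hFc ha0 (by linarith) hdiam hy hs hsℓ)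
    (L.center q.2) (a * sideLen q) (by positivity) (by nlinarith) g hg
    (by rwa [mul_assoc, ← mul_pow])
  refine ⟨E, fun x hx => L.inter_ball_center_subset hq ⟨(hE hx).1, ?_⟩, hEη, hEsum⟩
  exact ball_subset_ball (by nlinarith [inv_pos.2 hCl]) (hE hx).2

end Lattice

section LatticePacking

variable {n : ℕ} {F : Set (Euc (n + 1))} {μ : Measure (Euc (n + 1))} {Cl : ℝ}

lemma DSLattice.eq_of_mem_of_mem (L : DSLattice n F μ Cl) {a b : Cube n} (ha : L.mem a)
    (hb : L.mem b) (hab : a.1 = b.1) {x : Euc (n + 1)} (hxa : x ∈ a.2) (hxb : x ∈ b.2) : a = b := by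
  refine Prod.ext hab (by_contra fun hne => ?_)
  exact disjoint_left.1 (L.disj a.1 _ ha _ (by rw [hab]; exact hb) hne) hxa hxb

lemma DSLattice.pairwise_disjoint_of_generation_eq (L : DSLattice n F μ Cl) {T : Set (Cube n)}
    {j : ℤ} (hT : ∀ q ∈ T, L.mem q ∧ q.1 = j) :
    Pairwise (Function.onFun Disjoint fun q : T => (q : Cube n).2) := fun a b hab =>
  disjoint_left.2 fun _ hxa hxb => hab <| Subtype.ext <| L.eq_of_mem_of_mem (hT a a.2).1
    (hT b b.2).1 ((hT a a.2).2.trans (hT b b.2).2.symm) hxa hxb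

lemma DSLattice.tsum_measure_le_of_generation_eq (L : DSLattice n F μ Cl) {T : Set (Cube n)}
    {j : ℤ} {B : Set (Euc (n + 1))} (hT : ∀ q ∈ T, L.mem q ∧ q.1 = j) (hB : ∀ q ∈ T, q.2 ⊆ B) :
    ∑' q : T, μ (q : Cube n).2 ≤ μ B :=
  (tsum_meas_le_meas_iUnion_of_disjoint μ (fun q : T => L.measurableSet _ _ (hT q q.2).1)
    (L.pairwise_disjoint_of_generation_eq hT)).trans
    (measure_mono (iUnion_subset fun q => hB q q.2))

lemma DSLattice.measure_pos (L : DSLattice n F μ Cl) {q : Cube n} (hq : L.mem q) : 0 < μ q.2 := by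
  have := one_pos.trans_le L.one_le_Cl
  exact (ENNReal.ofReal_pos.2 (by positivity)).trans_le (L.measure_lb _ _ hq)

lemma DSLattice.countable_setOf_inD (L : DSLattice n F μ Cl) {R : Cube n} (hR : L.mem R) :
    {q | InD L R q}.Countable := by
  have hgen : ∀ j : ℤ, {q | InD L R q ∧ q.1 = j}.Countable := fun j => by
    set T : Set (Cube n) := {q | InD L R q ∧ q.1 = j}
    have hT : ∀ q ∈ T, L.mem q ∧ q.1 = j := fun q hq => ⟨hq.1.1, hq.2⟩
    have hsub : ⋃ q : T, (q : Cube n).2 ⊆ R.2 := iUnion_subset fun q => q.2.1.2.1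
    have hfin : μ (⋃ q : T, (q : Cube n).2) ≠ ⊤ :=
      ((measure_mono hsub).trans (L.measure_ub _ _ hR)).trans_lt ENNReal.ofReal_lt_top |>.ne
    have hpos := Measure.countable_meas_pos_of_disjoint_of_meas_iUnion_ne_top μ
      (fun q : T => L.measurableSet _ _ (hT q q.2).1) (L.pairwise_disjoint_of_generation_eq hT) hfin
    exact countable_coe_iff.1 <| countable_univ_iff.1 <|
      hpos.mono fun q _ => L.measure_pos (hT q q.2).1
  have hsub : {q | InD L R q} ⊆ ⋃ j, {q | InD L R q ∧ q.1 = j} := fun q hq =>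
    mem_iUnion.2 ⟨q.1, hq, rfl⟩
  exact (countable_iUnion hgen).mono hsub

lemma DSLattice.inD_of_mem_of_mem (L : DSLattice n F μ Cl) {a b : Cube n} (ha : L.mem a)
    (hb : L.mem b) (hab : a.1 ≤ b.1) {x : Euc (n + 1)} (hxa : x ∈ a.2) (hxb : x ∈ b.2) :
    InD L a b :=
  ⟨hb, L.nested _ _ hab _ hb _ ha ⟨x, hxb, hxa⟩, hab⟩

lemma sideLen_div_two_pow {a q : Cube n} (h : q.1 ≤ a.1) :
    sideLen q / 2 ^ (a.1 - q.1).toNat = sideLen a := by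
  rw [sideLen, sideLen, ← zpow_natCast, Int.toNat_of_nonneg (by lia), ← zpow_sub₀ two_ne_zero]
  congr 1
  ring

/-- The cubes `Q ∈ D_μ(R)` with `bβ(Q) > ε`, the bilateral beta numbers being those of `G`. -/
def highBetaCubes (L : DSLattice n F μ Cl) (G : Set (Euc (n + 1))) (ε : ℝ) (R : Cube n) :
    Set (Cube n) :=
  {q | InD L R q ∧ ε < bbetaQ n L G q}

/-- The points of the cube `q` lying in fewer than `N` cubes of `highBetaCubes L G ε q`. -/
def fewHighBetaPart (L : DSLattice n F μ Cl) (G : Set (Euc (n + 1))) (ε : ℝ) (N : ENNReal)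
    (q : Cube n) : Set (Euc (n + 1)) :=
  {x ∈ q.2 | overlapCount (fun a : highBetaCubes L G ε q => (a : Cube n).2) x < N}

variable (L : DSLattice n F μ Cl) {G : Set (Euc (n + 1))} {ε : ℝ} {N : ENNReal} {R q : Cube n}

lemma DSLattice.countable_highBetaCubes (hR : L.mem R) : (highBetaCubes L G ε R).Countable :=
  (L.countable_setOf_inD hR).mono fun _ hq => hq.1

lemma measurableSet_fewHighBetaPart (hq : L.mem q) :
    MeasurableSet (fewHighBetaPart L G ε N q) := by
  have := (L.countable_highBetaCubes (G := G) (ε := ε) hq).to_subtype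
  exact (L.measurableSet _ _ hq).inter <| measurableSet_lt
    (measurable_overlapCount fun a => L.measurableSet _ _ a.2.1.1) measurable_const

lemma mem_highBetaSet_of_mem_highBetaCubes {a : Cube n} (ha : a ∈ highBetaCubes L G ε q)
    {x : Euc (n + 1)} (hx : x ∈ a.2) : x ∈ highBetaSet n G ε (sideLen a) := by
  refine ⟨L.center a.2, ?_, ?_⟩
  · have := (edist_le_ediam_of_mem (L.center_mem _ _ ha.1.1) hx).trans (L.diam_le _ _ ha.1.1)
    rwa [edist_dist, ENNReal.ofReal_le_ofReal_iff (by positivity)] at this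
  · have := ha.2
    rwa [bbetaQ, ← mul_assoc, show (100 * 4 : ℝ) = 400 by norm_num] at this

-- The cubes containing a given point have distinct generations.
lemma overlapCount_highBetaCubes_le {E : Set (Euc (n + 1))} {x : Euc (n + 1)} (hx : x ∈ E) :
    overlapCount (fun a : highBetaCubes L G ε q => (a : Cube n).2) x ≤
      overlapCount (fun j : ℕ => E ∩ highBetaSet n G ε (sideLen q / 2 ^ j)) x := by
  refine overlapCount_le_of_injOn (fun a => ((a : Cube n).1 - q.1).toNat) ?_ fun a ha => ⟨hx, ?_⟩
  · intro a ha b hb hab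
    have hqa := a.2.1.2.2
    have hqb := b.2.1.2.2
    exact Subtype.ext (L.eq_of_mem_of_mem a.2.1.1 b.2.1.1 (by simp only at hab; lia) ha hb)
  · rw [sideLen_div_two_pow a.2.1.2.2]
    exact mem_highBetaSet_of_mem_highBetaCubes L a.2 ha

lemma measure_le_mul_measure_fewHighBetaPart {η C : ℝ} (hη : 0 < η) {N : ℕ} (hN : N ≠ 0)
    (hCN : 2 * C / η ≤ N) (hq : L.mem q) {E : Set (Euc (n + 1))} (hEq : E ⊆ q.2)
    (hE : ENNReal.ofReal (η * sideLen q ^ n) ≤ μ E)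
    (hsum : ∑' j : ℕ, μ (E ∩ highBetaSet n G ε (sideLen q / 2 ^ j)) ≤
      ENNReal.ofReal (C * sideLen q ^ n)) :
    μ q.2 ≤ ENNReal.ofReal (2 * Cl / η) * μ (fewHighBetaPart L G ε N q) := by
  have hℓ := sideLen_pos q
  have hCl := one_pos.trans_le L.one_le_Cl
  have hhalf : ENNReal.ofReal (η / 2 * sideLen q ^ n) ≤ μ (fewHighBetaPart L G ε N q) := by
    refine (le_measure_overlapCount_lt μ
      (fun j : ℕ => E ∩ highBetaSet n G ε (sideLen q / 2 ^ j)) (N := N) (by simpa)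
      (ENNReal.natCast_ne_top N) ENNReal.ofReal_ne_top ?_ (hsum.trans ?_)).trans
      (measure_mono fun x hx => ⟨hEq hx.1, (overlapCount_highBetaCubes_le L hx.1).trans_lt hx.2⟩)
    · refine (le_of_eq ?_).trans hE
      rw [← ENNReal.ofReal_ofNat, ← ENNReal.ofReal_mul two_pos.le]
      ring_nf
    · rw [← ENNReal.ofReal_natCast, ← ENNReal.ofReal_mul (by positivity), ← mul_assoc]
      rw [div_le_iff₀ hη] at hCN
      gcongr
      linarith
  calc μ q.2 ≤ ENNReal.ofReal (Cl * sideLen q ^ n) := L.measure_ub _ _ hq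
    _ = ENNReal.ofReal (2 * Cl / η) * ENNReal.ofReal (η / 2 * sideLen q ^ n) := by
        rw [← ENNReal.ofReal_mul (by positivity)]
        field_simp
    _ ≤ _ := by gcongr

-- The first cube `q` whose part contains `x` contains all the others, so their number is counted
-- by the condition defining the part of `q`.
lemma overlapCount_fewHighBetaPart_le (x : Euc (n + 1)) :
    overlapCount (fun q : highBetaCubes L G ε R => fewHighBetaPart L G ε N q) x ≤ N := by
  set T : Set (Cube n) := {q ∈ highBetaCubes L G ε R | x ∈ fewHighBetaPart L G ε N q} with hT
  rw [overlapCount_coe_eq_encard, ← hT]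
  obtain hempty | hne := T.eq_empty_or_nonempty
  · simp [hempty]
  obtain ⟨q, hq, hmin⟩ := exists_minimalFor_of_wellFoundedLT (· ∈ T)
    (fun q : Cube n => (q.1 - R.1).toNat) hne
  have hTq : T ⊆ {a ∈ highBetaCubes L G ε q | x ∈ a.2} := fun a ha => by
    have hqa : q.1 ≤ a.1 := by
      have hRq := hq.1.1.2.2
      have hRa := ha.1.1.2.2
      by_contra! hlt
      have := hmin ha (by simp only; lia)
      simp only at this
      lia
    exact ⟨⟨L.inD_of_mem_of_mem hq.1.1.1 ha.1.1.1 hqa hq.2.1 ha.2.1, ha.1.2⟩, ha.2.1⟩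
  have hcount := hq.2.2
  rw [overlapCount_coe_eq_encard] at hcount
  refine le_trans ?_ hcount.le
  exact_mod_cast encard_le_encard hTq

lemma exists_tsum_measure_highBetaCubes_le (hn : 0 < n) {C₀ θ ε : ℝ} (M : ℝ) (hC₀ : 0 < C₀)
    (hCl : 0 < Cl) (hθ : 0 < θ) (hε : 0 < ε) :
    ∃ K : ℝ, 0 < K ∧ ∀ F : Set (Euc (n + 1)), IsClosed F → UnifRectifiable n C₀ θ M F →
      ∀ (L : DSLattice n F (μH[n].restrict F) Cl) (R : Cube n), L.mem R →
      ∑' q : highBetaCubes L F ε R, μH[n].restrict F (q : Cube n).2 ≤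
        ENNReal.ofReal K * μH[n].restrict F R.2 := by
  obtain ⟨η, hη, C, hC, hpiece⟩ :=
    exists_subset_cube_tsum_measure_inter_highBetaSet_le hn M hC₀ hCl hθ hε
  obtain ⟨N, hN⟩ := exists_nat_gt (2 * C / η)
  have hN0 : (0 : ℝ) < N := (by positivity : (0 : ℝ) < 2 * C / η).trans hN
  refine ⟨2 * Cl / η * N, by positivity, fun F hFc hF L R hR => ?_⟩
  have := (L.countable_highBetaCubes (G := F) (ε := ε) hR).to_subtype
  calc ∑' q : highBetaCubes L F ε R, μH[n].restrict F (q : Cube n).2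
      ≤ ∑' q : highBetaCubes L F ε R, ENNReal.ofReal (2 * Cl / η) *
          μH[n].restrict F (fewHighBetaPart L F ε N q) := by
        refine ENNReal.tsum_le_tsum fun q => ?_
        obtain ⟨E, hEq, hE, hsum⟩ := hpiece F hFc hF L q q.2.1.1
        exact measure_le_mul_measure_fewHighBetaPart L hη (by exact_mod_cast hN0.ne') hN.le
          q.2.1.1 hEq hE hsum
    _ ≤ ENNReal.ofReal (2 * Cl / η) * (N * μH[n].restrict F R.2) := by
        rw [ENNReal.tsum_mul_left]
        gcongr
        exact tsum_measure_le_of_overlapCount_le _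
          (fun q => measurableSet_fewHighBetaPart L q.2.1.1) (L.measurableSet _ _ hR)
          (fun q => (sep_subset _ _).trans q.2.1.2.1) (overlapCount_fewHighBetaPart_le L)
    _ = ENNReal.ofReal (2 * Cl / η * N) * μH[n].restrict F R.2 := by
        rw [ENNReal.ofReal_mul (by positivity), ENNReal.ofReal_natCast, mul_assoc]

end LatticePacking

section TopCubes

variable {n : ℕ} {Ω : Set (Euc (n + 1))} {μ : Measure (Euc (n + 1))} {Cl : ℝ}
  (L : DSLattice n (frontier Ω) μ Cl) {p : Euc (n + 1)} {R₀ : Cube n} {A ε : ℝ}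

lemma topFam_subset_gfam : ∀ k, TopFam Ω μ L p R₀ A ε k ⊆ Gfam Ω μ L p R₀ A
  | 0, _, hq => hq.1
  | _ + 1, _, ⟨_, _, _, hq⟩ => hq

/-- The children of the cube `R`. -/
def DSLattice.children (R : Cube n) : Set (Cube n) :=
  {q | L.mem q ∧ q.1 = R.1 + 1 ∧ q.2 ⊆ R.2}

lemma exists_mem_children_of_mem_stopFam {R q : Cube n} (hR : R ∈ Gfam Ω μ L p R₀ A)
    (hq : q ∈ StopFam Ω μ L p R₀ A ε R) (hqG : q ∈ Gfam Ω μ L p R₀ A) :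
    ∃ a ∈ highBetaCubes L (frontier Ω) ε R₀, q ∈ L.children a := by
  obtain ⟨hqm, hqR, hRq, hbad, -⟩ := hq
  obtain ⟨a, ⟨ham, hgen, hqa⟩, hβ⟩ := hbad.resolve_left (not_not.2 hqG)
  obtain ⟨x, hx⟩ := L.nonempty _ _ hqm
  have haR : InD L R a := L.inD_of_mem_of_mem hR.1.1 ham (by lia) (hqR hx) (hqa hx)
  have haR₀ : InD L R₀ a := ⟨ham, haR.2.1.trans hR.1.2.1, hR.1.2.2.trans haR.2.2⟩
  exact ⟨a, ⟨haR₀, hβ⟩, hqm, by lia, hqa⟩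

lemma topAll_subset : TopAll Ω μ L p R₀ A ε ⊆
    {q | InD L R₀ q ∧ q.1 = R₀.1 + 10} ∪
      ⋃ a ∈ highBetaCubes L (frontier Ω) ε R₀, L.children a := by
  rintro q ⟨_ | k, hq⟩
  · exact Or.inl ⟨hq.1.1, hq.2⟩
  · obtain ⟨R, hR, hqR, hqG⟩ := hq
    obtain ⟨a, ha, hqa⟩ :=
      exists_mem_children_of_mem_stopFam L (topFam_subset_gfam L k hR) hqR hqG
    exact Or.inr (mem_biUnion ha hqa)

lemma tsum_measure_topAll_le : ∑' q : TopAll Ω μ L p R₀ A ε, μ (q : Cube n).2 ≤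
    μ R₀.2 + ∑' q : highBetaCubes L (frontier Ω) ε R₀, μ (q : Cube n).2 := by
  have hfirst : ∑' q : {q | InD L R₀ q ∧ q.1 = R₀.1 + 10}, μ (q : Cube n).2 ≤ μ R₀.2 :=
    L.tsum_measure_le_of_generation_eq (fun _ hq => ⟨hq.1.1, hq.2⟩) fun _ hq => hq.1.2.1
  have hchildren : ∀ a : Cube n, ∑' q : L.children a, μ (q : Cube n).2 ≤ μ a.2 := fun a =>
    L.tsum_measure_le_of_generation_eq (fun _ hq => ⟨hq.1, hq.2.1⟩) fun _ hq => hq.2.2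
  refine (ENNReal.tsum_mono_subtype (fun q : Cube n => μ q.2) (topAll_subset L)).trans <|
    (ENNReal.tsum_union_le (fun q : Cube n => μ q.2) _ _).trans (add_le_add hfirst ?_)
  exact (ENNReal.tsum_biUnion_le_tsum (fun q : Cube n => μ q.2) _ _).trans <|
    ENNReal.tsum_le_tsum fun a => hchildren a

end TopCubes

theorem top_packing_condition_general {n : ℕ} (hn : 0 < n) {C₀ Cl ε : ℝ} (θu Mu : ℝ)
    (hC₀ : 0 < C₀) (hCl : 0 < Cl) (hε : 0 < ε) :
    ∃ Mε : ℝ, 0 < Mε ∧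
      ∀ Ω : Set (Euc (n + 1)), UnifRectifiable n C₀ θu Mu (frontier Ω) →
      ∀ (L : DSLattice n (frontier Ω) (μH[n].restrict (frontier Ω)) Cl) (R₀ : Cube n)
        (p : Euc (n + 1)) (A : ℝ), L.mem R₀ →
        ∑' q : TopAll Ω (μH[n].restrict (frontier Ω)) L p R₀ A ε,
            μH[n].restrict (frontier Ω) (q : Cube n).2 ≤
          ENNReal.ofReal Mε * μH[n].restrict (frontier Ω) R₀.2 := by
  by_cases hθ : 0 < θu
  · obtain ⟨K, hK, hpack⟩ := exists_tsum_measure_highBetaCubes_le hn Mu hC₀ hCl hθ hε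
    refine ⟨1 + K, by positivity, fun Ω hΩ L R₀ p A hR₀ => (tsum_measure_topAll_le L).trans ?_⟩
    rw [ENNReal.ofReal_add zero_le_one hK.le, add_mul, ENNReal.ofReal_one, one_mul]
    gcongr
    exact hpack _ isClosed_frontier hΩ L R₀ hR₀
  · exact ⟨1, one_pos, fun Ω hΩ => absurd hΩ.2.1 hθ⟩

/-- Under the standing assumptions, assuming in addition that `∂Ω` is
uniformly `n`-rectifiable, the family `Top` of the corona decomposition satisfies the
Carleson packing condition `∑_{R ∈ Top} μ(R) ≤ M(ε) μ(R₀)`. -/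
theorem top_packing_condition
    (n : ℕ) (hn : 2 ≤ n) (C₀ Cl c c' A θu Mu : ℝ) (hC₀ : 1 ≤ C₀) (hCl : 1 ≤ Cl)
    (hc : 0 < c) (hc' : 0 < c') (hA : 1 ≤ A) (D : ℝ → ℝ) :
    ∀ ε ∈ Set.Ioo (0:ℝ) 1, ∃ Mε : ℝ, 0 < Mε ∧
      ∀ (F : Set (Euc (n+1))), IsClosed F → ADRegular n C₀ F →
        UnifRectifiable n C₀ θu Mu F →
      ∀ Ω : Set (Euc (n+1)), Ω = Fᶜ → frontier Ω = F →
      ∀ μ : Measure (Euc (n+1)), μ = (μH[n]).restrict (frontier Ω) →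
      ∀ (L : DSLattice n (frontier Ω) μ Cl) (R₀ : Cube n) (p : Euc (n+1)),
        L.mem R₀ → p ∈ Ω → p ∉ cubeBall L 4 R₀ →
        c * sideLen R₀ ≤ infDist p (frontier Ω) →
        infDist p (frontier Ω) ≤ infDist p R₀.2 →
        infDist p R₀.2 ≤ c⁻¹ * sideLen R₀ →
        c' ≤ hMeasure Ω p R₀.2 →
        WeakAInftyBallWith n Ω p (L.center R₀.2) (4 * sideLen R₀) D →
        (∑' q : TopAll Ω μ L p R₀ A ε, μ (q : Cube n).2) ≤
          ENNReal.ofReal Mε * μ R₀.2 := by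
  intro ε hε
  obtain ⟨Mε, hMε, h⟩ := top_packing_condition_general (n := n) (by lia) θu Mu
    (one_pos.trans_le hC₀) (one_pos.trans_le hCl) hε.1
  refine ⟨Mε, hMε, ?_⟩
  rintro F _ _ hF Ω _ rfl μ rfl L R₀ p hR₀ _ _ _ _ _ _ _
  exact h Ω hF L R₀ p A hR₀

end HarmMeas
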